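/- Let α, β ∈ K with αβ ≠ 0 and α^q ≠ β^{q+1}, suppose L_{α,β} is maximum scattered, and let λ = α^q/β^{q+1} (which lies in F). Then L_{α,β} is equivalent to the Sheekey linear set L_2^η for some η ∈ K if and only if λ^5 N(β)^2 + λ(1 − 3λ) N(β) + 1 = 0. -/

import Mathlib

/-- The `F`-linear map `T_{α,β} : K → K²`, `x ↦ (x − α x^{q²}, x^q − β x^{q²})`. -/
def Tmap (q : ℕ) {K : Type*} [Field K] (α β : K) (x : K) : K × K :=
  (x - α * x ^ q ^ 2, x ^ q - β * x ^ q ^ 2)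

/-- The linear set `L_{α,β}` is maximum scattered: `T_{α,β}` is injective and
`K`-linear dependence of `T_{α,β}(x)` and `T_{α,β}(y)` for nonzero `x, y` forces
`y/x ∈ F`. -/
def IsMaxScattered (q : ℕ) {K : Type*} [Field K] (F : Subfield K) (α β : K) : Prop :=
  Function.Injective (Tmap q α β) ∧
    ∀ x y : K, x ≠ 0 → y ≠ 0 →
      ¬ LinearIndependent K ![Tmap q α β x, Tmap q α β y] → y / x ∈ F

/-- `L_{α,β}` is equivalent to the linear set `L_s^η`: some field automorphism `τ` of `K`
together with an invertible `K`-linear map of `K²` carries the underlying `F`-subspace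
`{(x^τ − α^τ x^{q²τ}, x^{qτ} − β^τ x^{q²τ})}` onto `U_s^η = {(z, η z^{q^s} + z^{q^{5−s}})}`. -/
def IsEquivToL (q : ℕ) {K : Type*} [Field K] (α β η : K) (s : ℕ) : Prop :=
  ∃ τ : K ≃+* K, ∃ M : (K × K) ≃ₗ[K] K × K,
    (fun p => M p) '' {p : K × K | ∃ x : K,
        p = (τ x - τ α * (τ x) ^ q ^ 2, (τ x) ^ q - τ β * (τ x) ^ q ^ 2)} =
      {p : K × K | ∃ z : K, p = (z, η * z ^ q ^ s + z ^ q ^ (5 - s))}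

/-!
The definition of `λ` gives `α = λ^{q⁴} β^{q⁴} β`. If `L_{α,β}` is scattered, then for no `s ≠ 1`
does the `q`-polynomial `x - s λ^{q⁴} β^{q⁴} x^q + λ^{q⁴} β^{q⁴} β (s - 1) x^{q²}` of `q`-degree
`2` split over `K`, because its `q²` roots are mapped by `T_{α,β}` to one point. Eliminating `x`
gives two conditions on `s`, `s^q`, `s^{q²}`, and eliminating `s^{q²}` from these gives a plane
curve `G(s, s^q) = 0` of bidegree `(2, 2)`. Suppose `λ ∉ F` and that no `s` in the algebraic
closure yields a splitting polynomial. A combination of the relations then factors as `P M = 0`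
along the solutions of `G(s, s^q) = 0`, where `P = 0` would force the splitting; hence `M = 0`.
The solutions are then simple, so there are `2q + 2` of them, while on `M = 0` they are among the
roots of a nonzero polynomial of degree at most `2q + 1`: a norm from the quadratic cover `G`.
This elementary count takes the place of the Hasse–Weil bound.

Once `λ ∈ F`, comparing coefficients shows that `L_{α,β}` is equivalent to some `L_2^η` if and only
if `α = t^{q² + q³ + q⁴}` and `β t^q = -(1 + N(t))` for some `t`. With `u = 1 / (1 + N(t)) ∈ F`
this amounts to `u (1 - u) = λ` and `N(β) u³ λ = -1`, and eliminating `u` leaves the stated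
equation.
-/

namespace LinearSetFive

open Polynomial

/-! ### Polynomials over finite and algebraically closed fields -/

theorem eq_zero_of_forall_sum_mul_pow_pow_eq_zero {K : Type*} [Field K] [Finite K] {q n : ℕ}
    (hq : 1 < q) (hK : Nat.card K = q ^ n) {c : Fin n → K}
    (hc : ∀ x, ∑ i, c i * x ^ q ^ (i : ℕ) = 0) : c = 0 := by
  have := Fintype.ofFinite K
  funext j
  set f : K[X] := ∑ i : Fin n, C (c i) * X ^ q ^ (i : ℕ) with hf
  have hdeg : f.degree < (Finset.univ : Finset K).card := by
    rw [Finset.card_univ, ← Nat.card_eq_fintype_card, hK]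
    refine (degree_sum_le _ _).trans_lt ((Finset.sup_lt_iff (WithBot.bot_lt_coe _)).2 fun i _ => ?_)
    exact (degree_C_mul_X_pow_le _ _).trans_lt (by exact_mod_cast Nat.pow_lt_pow_right hq i.2)
  have hf0 : f = 0 := eq_zero_of_degree_lt_of_eval_finset_eq_zero _ hdeg fun x _ => by
    simpa [hf, eval_finsetSum] using hc x
  calc c j = f.coeff (q ^ (j : ℕ)) := by
        simp [hf, coeff_X_pow, Nat.pow_right_inj hq, Fin.val_inj]
    _ = 0 := by rw [hf0, coeff_zero]

theorem mem_range_algebraMap_of_pow_natCard_eq_self {K k : Type*} [Field K] [Finite K] [Field k]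
    [Algebra K k] {y : k} (hy : y ^ Nat.card K = y) : y ∈ (algebraMap K k).range := by
  have := Fintype.ofFinite K
  rw [Nat.card_eq_fintype_card] at hy
  have hsplits : (X ^ Fintype.card K - X : K[X]).Splits := by
    simpa using (FiniteField.isSplittingField_sub K K).splits
  refine hsplits.mem_range_of_isRoot
    (FiniteField.X_pow_card_sub_X_ne_zero K Fintype.one_lt_card) ?_
  simp [hy]

section Coefficients

variable {R : Type*} [Semiring R]

theorem coeff_one_linear (a b : R) : (C a * X + C b).coeff 1 = a := by
  rw [coeff_add, coeff_C_mul_X, coeff_C_succ, if_pos rfl, add_zero]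

theorem coeff_two_quadratic (a b d : R) : (C a * X ^ 2 + C b * X + C d).coeff 2 = a := by
  rw [coeff_add, coeff_add, coeff_C_mul_X_pow, coeff_C_mul_X, coeff_C_succ, if_pos rfl,
    if_neg (by decide), add_zero, add_zero]

theorem coeff_two_linear_mul_linear (a b a' b' : R) :
    ((C a * X + C b) * (C a' * X + C b')).coeff 2 = a * a' := by
  rw [show 2 = 1 + 1 from rfl, coeff_mul_add_eq_of_natDegree_le natDegree_linear_le
    natDegree_linear_le, coeff_one_linear, coeff_one_linear]

end Coefficients

section Dickson

variable {R : Type*} [CommRing R]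

theorem eval_add_dickson_one_mul (x y : R) (n : ℕ) :
    (dickson 1 (x * y) n).eval (x + y) = x ^ n + y ^ n := by
  induction n using Nat.twoStepInduction with
  | zero => norm_num [dickson_zero]
  | one => simp
  | more n ih₀ ih₁ =>
    rw [dickson_add_two, eval_sub, eval_mul, eval_mul, ih₀, ih₁, eval_X, eval_C]
    ring

theorem eval_eval_dickson_one {E a : R[X]} {t x y : R} (hE : E.eval t = x + y)
    (ha : a.eval t = x * y) (n : ℕ) : ((dickson 1 a n).eval E).eval t = x ^ n + y ^ n := by
  rw [← eval_add_dickson_one_mul, ← hE, ← ha]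
  exact (eval_map_apply (f := evalRingHom t) (p := dickson 1 a n) E).symm.trans
    (by rw [map_dickson]; rfl)

theorem natDegree_eval_dickson_one_le {E a : R[X]} {d : ℕ} (hE : E.natDegree ≤ d)
    (ha : a.natDegree ≤ 2 * d) (n : ℕ) : ((dickson 1 a n).eval E).natDegree ≤ d * n := by
  induction n using Nat.twoStepInduction with
  | zero =>
    rw [dickson_zero]
    norm_num
  | one => simpa using hE
  | more n ih₀ ih₁ =>
    rw [dickson_add_two, eval_sub, eval_mul, eval_mul, eval_X, eval_C]
    refine (natDegree_sub_le _ _).trans (max_le ?_ ?_)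
    · exact (natDegree_mul_le_of_le hE ih₁).trans (by linarith)
    · exact (natDegree_mul_le_of_le ha ih₀).trans (by linarith)

theorem coeff_eval_dickson_one {E a : R[X]} {d : ℕ} (hE : E.natDegree ≤ d)
    (ha : a.natDegree < 2 * d) {n : ℕ} (hn : n ≠ 0) :
    ((dickson 1 a n).eval E).coeff (d * n) = E.coeff d ^ n := by
  induction n using Nat.twoStepInduction with
  | zero => exact absurd rfl hn
  | one => simp
  | more n _ ih₁ =>
    have h₁ := natDegree_eval_dickson_one_le hE ha.le (n + 1)
    have h₀ := natDegree_eval_dickson_one_le hE ha.le n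
    have h : (a * (dickson 1 a n).eval E).natDegree < d + d * (n + 1) :=
      (natDegree_mul_le_of_le le_rfl h₀).trans_lt (by linarith)
    rw [dickson_add_two, eval_sub, eval_mul, eval_mul, eval_X, eval_C, coeff_sub,
      show d * (n + 2) = d + d * (n + 1) by ring, coeff_mul_add_eq_of_natDegree_le hE h₁,
      coeff_eq_zero_of_natDegree_lt h, ih₁ n.succ_ne_zero]
    ring

/-- For roots `V`, `V'` of `V ^ 2 - E V + w H`, the norm
`(c t V ^ q - w ^ q (b + e V)) (c t V' ^ q - w ^ q (b + e V'))`, divided by `t w ^ q`. -/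
noncomputable def frobNorm (q : ℕ) (b w E H : R[X]) (c e : R) : R[X] :=
  C (c ^ 2) * (X * H ^ q)
    - C c * (b * (dickson 1 (w * H) q).eval E
        + C e * ((w * H) * (dickson 1 (w * H) (q - 1)).eval E))
    + w ^ q * (b ^ 2 + C e * (b * E) + C (e ^ 2) * (w * H)).divX

section

variable {q : ℕ} {b w E H : R[X]} {c e : R}

theorem mul_eval_frobNorm (hq : q ≠ 0)
    (h0 : (b ^ 2 + C e * (b * E) + C (e ^ 2) * (w * H)).coeff 0 = 0) {t V V' : R}
    (hE : E.eval t = V + V') (hH : w.eval t * H.eval t = V * V') :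
    t * w.eval t ^ q * (frobNorm q b w E H c e).eval t =
      (c * t * V ^ q - w.eval t ^ q * (b.eval t + e * V)) *
        (c * t * V' ^ q - w.eval t ^ q * (b.eval t + e * V')) := by
  obtain ⟨n, rfl⟩ := Nat.exists_eq_succ_of_ne_zero hq
  have hdiv : t * (b ^ 2 + C e * (b * E) + C (e ^ 2) * (w * H)).divX.eval t =
      (b.eval t + e * V) * (b.eval t + e * V') := by
    have h := congrArg (eval t) (X_mul_divX_add (b ^ 2 + C e * (b * E) + C (e ^ 2) * (w * H)))
    rw [h0] at h
    simp only [eval_add, eval_mul, eval_X, eval_C, eval_pow, hE, hH, add_zero] at h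
    linear_combination h
  have hpow : w.eval t ^ (n + 1) * H.eval t ^ (n + 1) = V ^ (n + 1) * V' ^ (n + 1) := by
    rw [← mul_pow, hH, mul_pow]
  have hHw : (w * H).eval t = V * V' := by rw [eval_mul, hH]
  simp only [frobNorm, eval_add, eval_sub, eval_mul, eval_C, eval_pow, eval_X, Nat.succ_eq_add_one,
    Nat.add_sub_cancel, eval_eval_dickson_one hE hHw, hH]
  linear_combination c ^ 2 * t ^ 2 * hpow + (w.eval t ^ (n + 1)) ^ 2 * hdiv

theorem natDegree_pow_mul_divX_lt (hq : 2 ≤ q) (hb : b.natDegree ≤ 1) (hw : w.natDegree ≤ 1)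
    (hE : E.natDegree ≤ 2) (hH : H.natDegree ≤ 2) :
    (w ^ q * (b ^ 2 + C e * (b * E) + C (e ^ 2) * (w * H)).divX).natDegree < 2 * q + 1 := by
  have h : (b ^ 2 + C e * (b * E) + C (e ^ 2) * (w * H)).natDegree ≤ 3 := by
    refine natDegree_add_le_of_degree_le (natDegree_add_le_of_degree_le ?_ ?_) ?_
    · exact (natDegree_pow_le_of_le 2 hb).trans (by norm_num)
    · exact (natDegree_C_mul_le _ _).trans (natDegree_mul_le_of_le hb hE)
    · exact (natDegree_C_mul_le _ _).trans (natDegree_mul_le_of_le hw hH)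
  have h' := natDegree_divX_eq_natDegree_tsub_one
    (p := b ^ 2 + C e * (b * E) + C (e ^ 2) * (w * H))
  exact (natDegree_mul_le_of_le (natDegree_pow_le_of_le q hw) le_rfl).trans_lt (by omega)

theorem natDegree_frobNorm_le (hq : 2 ≤ q) (hb : b.natDegree ≤ 1) (hw : w.natDegree ≤ 1)
    (hE : E.natDegree ≤ 2) (hH : H.natDegree ≤ 2) :
    (frobNorm q b w E H c e).natDegree ≤ 2 * q + 1 := by
  have hwH : (w * H).natDegree ≤ 3 := natDegree_mul_le_of_le hw hH
  have hS := natDegree_eval_dickson_one_le hE (hwH.trans (by norm_num : 3 ≤ 2 * 2))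
  refine natDegree_add_le_of_degree_le ((natDegree_sub_le _ _).trans (max_le ?_ ?_))
    (natDegree_pow_mul_divX_lt hq hb hw hE hH).le
  · exact (natDegree_C_mul_le _ _).trans
      ((natDegree_mul_le_of_le natDegree_X_le (natDegree_pow_le_of_le q hH)).trans (by linarith))
  · refine (natDegree_C_mul_le _ _).trans (natDegree_add_le_of_degree_le ?_ ?_)
    · exact (natDegree_mul_le_of_le hb (hS q)).trans (by omega)
    · exact (natDegree_C_mul_le _ _).trans
        ((natDegree_mul_le_of_le hwH (hS (q - 1))).trans (by omega))

theorem coeff_frobNorm (hq : 2 ≤ q) (hb : b.natDegree ≤ 1) (hw : w.natDegree ≤ 1)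
    (hE : E.natDegree ≤ 2) (hH : H.natDegree ≤ 2) :
    (frobNorm q b w E H c e).coeff (2 * q + 1) = c ^ 2 * H.coeff 2 ^ q -
      c * (b.coeff 1 * E.coeff 2 ^ q + e * (w.coeff 1 * H.coeff 2 * E.coeff 2 ^ (q - 1))) := by
  have hwH : (w * H).natDegree ≤ 3 := natDegree_mul_le_of_le hw hH
  have hS := natDegree_eval_dickson_one_le hE (hwH.trans (by norm_num : 3 ≤ 2 * 2))
  have hS' : ∀ {n}, n ≠ 0 → ((dickson 1 (w * H) n).eval E).coeff (2 * n) = E.coeff 2 ^ n :=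
    coeff_eval_dickson_one hE (hwH.trans_lt (by norm_num))
  have hXH : (X * H ^ q).coeff (2 * q + 1) = H.coeff 2 ^ q := by
    rw [coeff_X_mul, mul_comm, coeff_pow_of_natDegree_le hH]
  have hbS : (b * (dickson 1 (w * H) q).eval E).coeff (2 * q + 1) =
      b.coeff 1 * E.coeff 2 ^ q := by
    rw [add_comm, coeff_mul_add_eq_of_natDegree_le hb (hS q), hS' (by omega)]
  have hwHS : ((w * H) * (dickson 1 (w * H) (q - 1)).eval E).coeff (2 * q + 1) =
      w.coeff 1 * H.coeff 2 * E.coeff 2 ^ (q - 1) := by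
    rw [show 2 * q + 1 = 1 + 2 + 2 * (q - 1) by omega,
      coeff_mul_add_eq_of_natDegree_le hwH (hS (q - 1)), hS' (by omega),
      coeff_mul_add_eq_of_natDegree_le hw hH]
  rw [frobNorm, coeff_add, coeff_sub, coeff_C_mul, coeff_C_mul, coeff_add, coeff_C_mul, hXH, hbS,
    hwHS, coeff_eq_zero_of_natDegree_lt (natDegree_pow_mul_divX_lt hq hb hw hE hH), add_zero]

end

theorem card_le_of_forall_exists_mul_pow_eq [IsDomain R] {q : ℕ} (hq : 2 ≤ q) {b w E H : R[X]}
    {c e : R} (hb : b.natDegree ≤ 1) (hw : w.natDegree ≤ 1) (hE : E.natDegree ≤ 2)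
    (hH : H.natDegree ≤ 2) (h0 : (b ^ 2 + C e * (b * E) + C (e ^ 2) * (w * H)).coeff 0 = 0)
    (hlead : c ^ 2 * H.coeff 2 ^ q - c * (b.coeff 1 * E.coeff 2 ^ q +
      e * (w.coeff 1 * H.coeff 2 * E.coeff 2 ^ (q - 1))) ≠ 0) {S : Finset R}
    (hS : ∀ t ∈ S, t ≠ 0 ∧ w.eval t ≠ 0 ∧ ∃ V, V ^ 2 - E.eval t * V + w.eval t * H.eval t = 0 ∧
      c * t * V ^ q = w.eval t ^ q * (b.eval t + e * V)) :
    S.card ≤ 2 * q + 1 := by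
  rw [← coeff_frobNorm hq hb hw hE hH] at hlead
  have hR : frobNorm q b w E H c e ≠ 0 := fun hR => hlead (by rw [hR, coeff_zero])
  suffices S.val ⊆ (frobNorm q b w E H c e).roots from
    (card_le_degree_of_subset_roots this).trans (natDegree_frobNorm_le hq hb hw hE hH)
  intro t ht
  obtain ⟨ht0, hwt, V, hV, hVq⟩ := hS t ht
  have h := mul_eval_frobNorm (q := q) (c := c) (by omega) h0 (V := V) (V' := E.eval t - V)
    (by ring) (by linear_combination hV)
  rw [hVq, sub_self, zero_mul] at h
  exact (mem_roots hR).2 ((mul_eq_zero.1 h).resolve_left (mul_ne_zero ht0 (pow_ne_zero q hwt)))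

end Dickson

section SimpleRoots

variable {k : Type*} [Field k] [IsAlgClosed k]

theorem exists_finset_card_eq_natDegree {p : k[X]} (hp : p ≠ 0)
    (hsimple : ∀ x, p.eval x = 0 → p.derivative.eval x ≠ 0) :
    ∃ S : Finset k, S.card = p.natDegree ∧ ∀ x ∈ S, p.eval x = 0 := by
  classical
  have hsep : p.Separable := (isCoprime_iff_aeval_ne_zero_of_isAlgClosed k k _ _).2 fun x => by
    simpa only [coe_aeval_eq_eval, or_iff_not_imp_left, not_not] using hsimple x
  refine ⟨p.roots.toFinset, ?_, fun x hx => (mem_roots hp).1 (Multiset.mem_toFinset.1 hx)⟩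
  rw [Multiset.toFinset_card_of_nodup (nodup_roots hsep),
    (IsAlgClosed.splits p).natDegree_eq_card_roots]

theorem exists_finset_card_eq_of_expand {q d : ℕ} (hq : 0 < q) (hqk : (q : k) = 0) {A B D : k[X]}
    (hA : A ≠ 0) (hAd : A.natDegree = d) (hBd : B.natDegree ≤ d) (hDd : D.natDegree ≤ d)
    (hsimple : ∀ s, A.eval (s ^ q) * s ^ 2 + B.eval (s ^ q) * s + D.eval (s ^ q) = 0 →
      2 * A.eval (s ^ q) * s + B.eval (s ^ q) ≠ 0) :
    ∃ S : Finset k, S.card = d * q + 2 ∧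
      ∀ s ∈ S, A.eval (s ^ q) * s ^ 2 + B.eval (s ^ q) * s + D.eval (s ^ q) = 0 := by
  set p : k[X] := expand k q A * X ^ 2 + (expand k q B * X + expand k q D) with hp
  have heval (s : k) :
      p.eval s = A.eval (s ^ q) * s ^ 2 + B.eval (s ^ q) * s + D.eval (s ^ q) := by
    simp only [hp, eval_add, eval_mul, eval_pow, eval_X, expand_eval, add_assoc]
  have hderiv (s : k) : p.derivative.eval s = 2 * A.eval (s ^ q) * s + B.eval (s ^ q) := by
    simp only [hp, derivative_add, derivative_mul, derivative_expand,
      ← map_natCast (C : k →+* k[X]), hqk, derivative_X_sq, derivative_X, eval_add, eval_mul,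
      eval_C, eval_X, expand_eval, map_zero, zero_mul, mul_zero, eval_zero, eval_one]
    ring
  have hlead : (expand k q A * X ^ 2).natDegree = d * q + 2 := by
    rw [natDegree_mul_X_pow _ ((expand_eq_zero hq).not.2 hA), natDegree_expand, hAd]
  have hrest : (expand k q B * X + expand k q D).natDegree ≤ d * q + 1 := by
    refine natDegree_add_le_of_degree_le (natDegree_mul_le_of_le ?_ natDegree_X_le) ?_
    · rw [natDegree_expand]
      exact Nat.mul_le_mul_right q hBd
    · rw [natDegree_expand]
      exact (Nat.mul_le_mul_right q hDd).trans (Nat.le_succ _)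
  have hdeg : p.natDegree = d * q + 2 := by
    rw [hp, natDegree_add_eq_left_of_natDegree_lt (by omega), hlead]
  have hp0 : p ≠ 0 := ne_zero_of_natDegree_gt (n := 0) (by omega)
  simpa only [hdeg, heval] using exists_finset_card_eq_natDegree hp0 fun s hs => by
    rw [hderiv]
    exact hsimple s (heval s ▸ hs)

theorem exists_finset_card_eq_sq {q : ℕ} (hq : 2 ≤ q)
    (hqk : (q : k) = 0) (a : k) {d : k} (hd : d ≠ 0) :
    ∃ S : Finset k, S.card = q ^ 2 ∧ ∀ x ∈ S, x + a * x ^ q + d * x ^ q ^ 2 = 0 := by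
  set p : k[X] := C d * X ^ q ^ 2 + (C a * X ^ q + X) with hp
  have heval (x : k) : p.eval x = x + a * x ^ q + d * x ^ q ^ 2 := by
    simp only [hp, eval_add, eval_mul, eval_C, eval_pow, eval_X]
    ring
  have hderiv (x : k) : p.derivative.eval x = 1 := by
    simp [hp, derivative_X_pow, hqk]
  have hrest : (C a * X ^ q + X : k[X]).natDegree ≤ q :=
    natDegree_add_le_of_degree_le (natDegree_C_mul_X_pow_le a q) (natDegree_X_le.trans (by omega))
  have hdeg : p.natDegree = q ^ 2 := by
    have hlead : (C d * X ^ q ^ 2 : k[X]).natDegree = q ^ 2 := natDegree_C_mul_X_pow _ _ hd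
    rw [hp, natDegree_add_eq_left_of_natDegree_lt, hlead]
    rw [hlead]
    exact hrest.trans_lt (by nlinarith)
  have hp0 : p ≠ 0 := ne_zero_of_natDegree_gt (n := 0) (by rw [hdeg]; positivity)
  simpa only [hdeg, heval] using exists_finset_card_eq_natDegree hp0 fun x _ => by
    rw [hderiv]
    exact one_ne_zero

end SimpleRoots

/-! ### Equivalence with Sheekey linear sets -/

section OrbitProd

variable {K : Type*} [Field K]

/-- The product of the first five iterates of `φ` at `x`. For the `q`-power Frobenius of a field
with `q ^ 5` elements it is the norm over the subfield with `q` elements. -/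
def orbitProd (φ : K →+* K) (x : K) : K :=
  x * φ x * φ (φ x) * φ (φ (φ x)) * φ (φ (φ (φ x)))

variable {φ : K →+* K}

theorem map_orbitProd {x : K} (h : φ (φ (φ (φ (φ x)))) = x) :
    φ (orbitProd φ x) = orbitProd φ x := by
  simp only [orbitProd, map_mul, h]
  ring

theorem orbitProd_ne_zero {x : K} (hx : x ≠ 0) : orbitProd φ x ≠ 0 := by
  simp [orbitProd, hx]

theorem orbitProd_mul (x y : K) : orbitProd φ (x * y) = orbitProd φ x * orbitProd φ y := by
  simp only [orbitProd, map_mul]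
  ring

theorem orbitProd_map {x : K} (h : φ (φ (φ (φ (φ x)))) = x) :
    orbitProd φ (φ x) = orbitProd φ x := by
  simp only [orbitProd, h]
  ring

theorem orbitProd_of_map_eq_self {x : K} (h : φ x = x) : orbitProd φ x = x ^ 5 := by
  simp only [orbitProd, h]
  ring

theorem orbitProd_eq_pow {q : ℕ} (hφ : ∀ x, φ x = x ^ q) (x : K) :
    orbitProd φ x = x ^ (1 + q + q ^ 2 + q ^ 3 + q ^ 4) := by
  simp only [orbitProd, hφ]
  ring

theorem iterate_five_eq_self [Finite K] {q : ℕ} (hφ : ∀ x, φ x = x ^ q)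
    (hK : Nat.card K = q ^ 5) (x : K) : φ (φ (φ (φ (φ x)))) = x := by
  have := Fintype.ofFinite K
  calc φ (φ (φ (φ (φ x)))) = x ^ Nat.card K := by
        simp only [hφ, hK]
        ring
    _ = x := by rw [Nat.card_eq_fintype_card, FiniteField.pow_card]

end OrbitProd

section Equivalence

variable {K : Type*} [Field K] {φ : K →+* K}

/-- `t` exhibits `L_{α,β}` as a Sheekey linear set: the coordinate change
`(x, y) ↦ (t x + y, x / t ^ q ^ 4)` carries it to `L_2^η` with `η = -t ^ q ^ 3`. -/
structure IsSheekeyParam (φ : K →+* K) (α β t : K) : Prop where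
  ne_zero : t ≠ 0
  alpha_eq : α = φ (φ t) * φ (φ (φ t)) * φ (φ (φ (φ t)))
  beta_mul : β * φ t = -(1 + orbitProd φ t)

theorem IsSheekeyParam.map {α β t : K} (h : IsSheekeyParam φ α β t) (τ : K →+* K)
    (hτ : ∀ x, τ (φ x) = φ (τ x)) : IsSheekeyParam φ (τ α) (τ β) (τ t) where
  ne_zero := (map_ne_zero τ).2 h.ne_zero
  alpha_eq := by simpa only [map_mul, hτ] using congrArg τ h.alpha_eq
  beta_mul := by
    simpa only [orbitProd, map_mul, map_neg, map_add, map_one, hτ] using congrArg τ h.beta_mul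

theorem isSheekeyParam_div (h5 : ∀ x, φ (φ (φ (φ (φ x)))) = x) {a b A B D η : K} (hB : B ≠ 0)
    (hD : D = -(a * A + b * B)) (h2 : a * φ (φ (φ D)) = -(η * φ (φ A)))
    (h3 : η * φ (φ B) = -φ (φ (φ A))) (h4 : η * φ (φ D) = -φ (φ (φ B))) :
    IsSheekeyParam φ a b (A / B) := by
  have hη : η ≠ 0 := by
    rintro rfl
    simp [hB] at h4
  have hA : A ≠ 0 := by
    rintro rfl
    simp [hB, hη] at h3
  have hAD2 : φ (φ (φ A)) * φ (φ D) = φ (φ B) * φ (φ (φ B)) := by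
    linear_combination φ (φ D) * h3 - φ (φ B) * h4
  have hAD3 : φ (φ (φ (φ A))) * φ (φ (φ D)) = φ (φ (φ B)) * φ (φ (φ (φ B))) := by
    simpa only [map_mul] using congrArg φ hAD2
  have hAD0 : φ A * D = B * φ B := by
    simpa only [map_mul, h5] using congrArg φ (congrArg φ hAD3)
  have ha : a * (φ (φ B) * φ (φ (φ B)) * φ (φ (φ (φ B)))) =
      φ (φ A) * φ (φ (φ A)) * φ (φ (φ (φ A))) := by
    linear_combination -a * φ (φ B) * hAD3 + φ (φ B) * φ (φ (φ (φ A))) * h2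
      - φ (φ A) * φ (φ (φ (φ A))) * h3
  have hφz : ∀ {x}, x ≠ 0 → φ x ≠ 0 := (map_ne_zero φ).2
  have hB1 := hφz hB
  have hB2 := hφz hB1
  have hB3 := hφz hB2
  have hB4 := hφz hB3
  refine ⟨div_ne_zero hA hB, ?_, ?_⟩
  · simp only [map_div₀]
    field_simp
    linear_combination ha
  · simp only [orbitProd, map_div₀]
    field_simp
    linear_combination -φ (φ B) * φ (φ (φ B)) * φ (φ (φ (φ B))) * hAD0
      + φ A * φ (φ B) * φ (φ (φ B)) * φ (φ (φ (φ B))) * hD - A * φ A * ha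

theorem isSheekeyParam_of_forall [Finite K] {q : ℕ} (hq : 1 < q) (hK : Nat.card K = q ^ 5)
    (hφ : ∀ x, φ x = x ^ q) {a b η A B A' B' : K} (hB : B' = 0 → B ≠ 0)
    (h : ∀ x, A' * (x - a * φ (φ x)) + B' * (φ x - b * φ (φ x)) =
      η * φ (φ (A * (x - a * φ (φ x)) + B * (φ x - b * φ (φ x)))) +
        φ (φ (φ (A * (x - a * φ (φ x)) + B * (φ x - b * φ (φ x)))))) :
    IsSheekeyParam φ a b (A / B) := by
  have h5 := iterate_five_eq_self hφ hK
  obtain ⟨D, hD⟩ : ∃ D, D = -(a * A + b * B) := ⟨_, rfl⟩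
  let c : Fin 5 → K := ![A' - φ (φ (φ D)), B', -(a * A' + b * B') - η * φ (φ A),
    -(η * φ (φ B)) - φ (φ (φ A)), -(η * φ (φ D)) - φ (φ (φ B))]
  have hc := congrFun <| eq_zero_of_forall_sum_mul_pow_pow_eq_zero hq hK (c := c) fun x => by
    have hx := h x
    rw [show A * (x - a * φ (φ x)) + B * (φ x - b * φ (φ x)) = A * x + B * φ x + D * φ (φ x) by
      rw [hD]; ring] at hx
    simp only [map_add, map_mul, h5] at hx
    have hpow : x ^ q = φ x ∧ x ^ q ^ 2 = φ (φ x) ∧ x ^ q ^ 3 = φ (φ (φ x)) ∧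
        x ^ q ^ 4 = φ (φ (φ (φ x))) := by
      refine ⟨?_, ?_, ?_, ?_⟩ <;> simp only [hφ] <;> ring
    simp only [Fin.sum_univ_five, Fin.isValue, Matrix.cons_val_zero, Fin.coe_ofNat_eq_mod,
      Nat.zero_mod, pow_zero, pow_one, Matrix.cons_val_one, Nat.one_mod, hpow, Matrix.cons_val,
      Nat.reduceMod, Nat.mod_succ, c]
    linear_combination hx
  have h0 : A' - φ (φ (φ D)) = 0 := hc 0
  have h1 : B' = 0 := hc 1
  have h2 : -(a * A' + b * B') - η * φ (φ A) = 0 := hc 2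
  have h3 : -(η * φ (φ B)) - φ (φ (φ A)) = 0 := hc 3
  have h4 : -(η * φ (φ D)) - φ (φ (φ B)) = 0 := hc 4
  exact isSheekeyParam_div h5 (η := η) (hB h1) hD (by linear_combination -h2 - a * h0 - b * h1)
    (by linear_combination -h3) (by linear_combination -h4)

theorem exists_isSheekeyParam_of_isEquivToL [Finite K] {q : ℕ} (hq : 1 < q)
    (hK : Nat.card K = q ^ 5) (hφ : ∀ x, φ x = x ^ q) {α β η : K}
    (h : IsEquivToL q α β η 2) : ∃ t, IsSheekeyParam φ α β t := by
  obtain ⟨τ, M, hM⟩ := h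
  have hMuv : ∀ u v, M (u, v) = u • M (1, 0) + v • M (0, 1) := fun u v => by
    rw [← map_smul, ← map_smul, ← map_add]
    simp
  have hB : (M (0, 1)).2 = 0 → (M (0, 1)).1 ≠ 0 := fun h2 h1 => by
    have : M (0, 1) = 0 := Prod.ext h1 h2
    simp at this
  suffices IsSheekeyParam φ (τ α) (τ β) ((M (1, 0)).1 / (M (0, 1)).1) from
    ⟨_, by simpa using this.map τ.symm.toRingHom fun x => by simp [hφ]⟩
  refine isSheekeyParam_of_forall hq hK hφ (A' := (M (1, 0)).2) (η := η) hB fun x => ?_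
  have hx : M (x - τ α * φ (φ x), φ x - τ β * φ (φ x)) ∈
      {p : K × K | ∃ z, p = (z, η * z ^ q ^ 2 + z ^ q ^ (5 - 2))} := by
    rw [← hM]
    refine ⟨_, ⟨τ.symm x, rfl⟩, ?_⟩
    simp [hφ, ← pow_mul, pow_two]
  obtain ⟨z, hz⟩ := hx
  have hz₁ := congrArg Prod.fst hz
  have hz₂ := congrArg Prod.snd hz
  rw [hMuv] at hz₁ hz₂
  simp only [Prod.fst_add, Prod.snd_add, Prod.smul_fst, Prod.smul_snd,
    smul_eq_mul] at hz₁ hz₂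
  rw [mul_comm _ (M (1, 0)).1, mul_comm _ (M (0, 1)).1] at hz₁
  rw [hz₁, mul_comm (M (1, 0)).2, mul_comm (M (0, 1)).2, hz₂]
  simp only [hφ]
  ring

/-- The linear automorphism `(x, y) ↦ (t x + y, x / u)` of the plane. -/
def shearScale (t : K) {u : K} (hu : u ≠ 0) : (K × K) ≃ₗ[K] K × K where
  toFun v := (t * v.1 + v.2, v.1 / u)
  invFun v := (u * v.2, v.1 - t * (u * v.2))
  map_add' v w := by ext <;> (simp only [Prod.fst_add, Prod.snd_add]; ring)
  map_smul' c v := by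
    ext <;> simp only [Prod.smul_fst, Prod.smul_snd, smul_eq_mul, RingHom.id_apply] <;> ring
  left_inv v := by ext <;> simp only <;> field_simp; ring
  right_inv v := by ext <;> simp only <;> field_simp; ring

section

variable {q : ℕ} {α β t : K}

theorem IsSheekeyParam.alpha_mul_add (h : IsSheekeyParam φ α β t) :
    α * t + β = -(1 / φ t) := by
  have hβ := h.beta_mul
  have : φ t ≠ 0 := by simp [h.ne_zero]
  rw [orbitProd] at hβ
  field_simp
  linear_combination hβ + t * φ t * h.alpha_eq

theorem IsSheekeyParam.shearScale_Tmap (hφ : ∀ x, φ x = x ^ q)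
    (h5 : ∀ x, φ (φ (φ (φ (φ x)))) = x) (h : IsSheekeyParam φ α β t)
    (ht : φ (φ (φ (φ t))) ≠ 0) (x : K) :
    shearScale t ht (Tmap q α β x) = (t * x + φ x + φ (φ x) / φ t,
      -φ (φ (φ t)) * (t * x + φ x + φ (φ x) / φ t) ^ q ^ 2 +
        (t * x + φ x + φ (φ x) / φ t) ^ q ^ 3) := by
  have hpow : ∀ y, y ^ q = φ y ∧ y ^ q ^ 2 = φ (φ y) ∧ y ^ q ^ 3 = φ (φ (φ y)) := fun y => by
    refine ⟨?_, ?_, ?_⟩ <;> simp only [hφ] <;> ring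
  have ht3 : φ (φ (φ t)) ≠ 0 := by simp [h.ne_zero]
  change (t * (x - α * x ^ q ^ 2) + (x ^ q - β * x ^ q ^ 2), (x - α * x ^ q ^ 2) / _) = _
  simp only [hpow]
  refine Prod.ext ?_ ?_
  · linear_combination -φ (φ x) * h.alpha_mul_add
  · simp only [map_add, map_mul, map_div₀, h5]
    rw [h.alpha_eq]
    field_simp
    ring

theorem IsSheekeyParam.isEquivToL [Finite K] (hφ : ∀ x, φ x = x ^ q)
    (h5 : ∀ x, φ (φ (φ (φ (φ x)))) = x) (hinj : Function.Injective (Tmap q α β))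
    (h : IsSheekeyParam φ α β t) : IsEquivToL q α β (-φ (φ (φ t))) 2 := by
  have ht : φ (φ (φ (φ t))) ≠ 0 := by simp [h.ne_zero]
  set z : K → K := fun x => t * x + φ x + φ (φ x) / φ t
  have hz : ∀ x, shearScale t ht (Tmap q α β x) =
      (z x, -φ (φ (φ t)) * z x ^ q ^ 2 + z x ^ q ^ 3) := h.shearScale_Tmap hφ h5 ht
  have hz_inj : Function.Injective z := fun x y hxy =>
    hinj ((shearScale t ht).injective (by rw [hz, hz, hxy]))
  have hz_surj : Function.Surjective z := Finite.surjective_of_injective hz_inj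
  refine ⟨RingEquiv.refl K, shearScale t ht, Set.Subset.antisymm ?_ ?_⟩
  · rintro _ ⟨_, ⟨x, rfl⟩, rfl⟩
    exact ⟨z x, hz x⟩
  · rintro _ ⟨y, rfl⟩
    obtain ⟨x, rfl⟩ := hz_surj y
    exact ⟨_, ⟨x, rfl⟩, hz x⟩

theorem exists_isEquivToL_iff [Finite K] (hq : 1 < q) (hK : Nat.card K = q ^ 5)
    (hφ : ∀ x, φ x = x ^ q) (hinj : Function.Injective (Tmap q α β)) :
    (∃ η, IsEquivToL q α β η 2) ↔ ∃ t, IsSheekeyParam φ α β t :=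
  ⟨fun ⟨_, h⟩ => exists_isSheekeyParam_of_isEquivToL hq hK hφ h,
    fun ⟨_, h⟩ => ⟨_, h.isEquivToL hφ (iterate_five_eq_self hφ hK) hinj⟩⟩

end

theorem map_eq_self_of_mul_one_sub {l n u : K} (hl : φ l = l) (hn : φ n = n) (hl0 : l ≠ 0)
    (hn0 : n ≠ 0) (hl1 : l ≠ 1) (hul : u * (1 - u) = l) (hun : n * u ^ 3 * l = -1) :
    φ u = u := by
  have hu : u = (l - 1 / (n * l)) / (1 - l) := by
    have : 1 - l ≠ 0 := sub_ne_zero.2 hl1.symm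
    field_simp
    linear_combination n * l * (u + 1) * hul + hun
  rw [hu]
  simp only [map_div₀, map_sub, map_mul, map_one, hl, hn]

theorem exists_mul_one_sub_iff {l n : K} (hl : l ≠ 0) (hn : n ≠ 0) (hl1 : l ≠ 1) :
    (∃ u, u * (1 - u) = l ∧ n * u ^ 3 * l = -1) ↔
      l ^ 5 * n ^ 2 + l * (1 - 3 * l) * n + 1 = 0 := by
  constructor
  · rintro ⟨u, hul, hun⟩
    have hu : n * l * (1 - l) * u = n * l ^ 2 - 1 := by
      linear_combination n * l * (u + 1) * hul + hun
    linear_combination -(n * l * (1 - l)) ^ 2 * hul +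
      (n * l * (1 - l) * (1 - u) - (n * l ^ 2 - 1)) * hu
  · intro h
    have hc : n * l * (1 - l) ≠ 0 := mul_ne_zero (mul_ne_zero hn hl) (sub_ne_zero.2 hl1.symm)
    obtain ⟨u, hu⟩ : ∃ u, n * l * (1 - l) * u = n * l ^ 2 - 1 := ⟨_, mul_div_cancel₀ _ hc⟩
    have hul : u * (1 - u) = l := by
      refine mul_left_cancel₀ (pow_ne_zero 2 hc) ?_
      linear_combination (n * l * (1 - l) * (1 - u) - (n * l ^ 2 - 1)) * hu - h
    exact ⟨u, hul, by linear_combination hu - n * l * (u + 1) * hul⟩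

theorem IsSheekeyParam.exists_mul_one_sub {α β t l : K}
    (h5 : ∀ x, φ (φ (φ (φ (φ x)))) = x) (hβ : β ≠ 0) (hα : φ α = l * (φ β * β))
    (h : IsSheekeyParam φ α β t) :
    ∃ u, u * (1 - u) = l ∧ orbitProd φ β * u ^ 3 * l = -1 := by
  have hβt := h.beta_mul
  have hNt : orbitProd φ t = t * φ t * φ (φ t) * φ (φ (φ t)) * φ (φ (φ (φ t))) := rfl
  have hNφ := map_orbitProd (h5 t)
  set N := orbitProd φ t
  have hN : 1 + N ≠ 0 := fun hN => by simp [hN, hβ, h.ne_zero] at hβt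
  have hφα : φ α = φ (φ (φ t)) * φ (φ (φ (φ t))) * t := by
    rw [h.alpha_eq, map_mul, map_mul, h5]
  have hβt' : φ β * φ (φ t) = -(1 + N) := by
    simpa only [map_mul, map_neg, map_add, map_one, hNφ] using congrArg φ hβt
  have hl : l * (1 + N) ^ 2 = N := by
    calc l * (1 + N) ^ 2 = l * (φ β * β) * φ t * φ (φ t) := by
          linear_combination l * (1 + N) * hβt - l * β * φ t * hβt'
      _ = N := by
          rw [← hα, hφα, hNt]
          ring
  have hn : orbitProd φ β * N = (-(1 + N)) ^ 5 := by
    rw [← orbitProd_of_map_eq_self (φ := φ) (x := -(1 + N)) (by simp [hNφ]), ← hβt, orbitProd_mul,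
      orbitProd_map (h5 t)]
  refine ⟨1 / (1 + N), ?_, ?_⟩
  · field_simp
    linear_combination -hl
  · field_simp
    refine mul_left_cancel₀ (pow_ne_zero 2 hN) ?_
    linear_combination orbitProd φ β * hl + hn

theorem isSheekeyParam_of_mul_one_sub {α β u l : K} (h5 : ∀ x, φ (φ (φ (φ (φ x)))) = x)
    (hβ : β ≠ 0) (hα : φ α = l * (φ β * β)) (hl : φ l = l) (hu : φ u = u)
    (hu0 : u ≠ 0) (hul : u * (1 - u) = l) (hun : orbitProd φ β * u ^ 3 * l = -1) :
    IsSheekeyParam φ α β (-1 / (u * φ (φ (φ (φ β))))) := by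
  have hα' : α = l * (β * φ (φ (φ (φ β)))) := by
    simpa only [map_mul, h5, hl] using congrArg (fun x => φ (φ (φ (φ x)))) hα
  set t := -1 / (u * φ (φ (φ (φ β)))) with ht
  have hφt : φ t = -1 / (u * β) := by
    simp only [ht, map_div₀, map_neg, map_one, map_mul, hu, h5]
  have hNt : orbitProd φ t * u = 1 - u := by
    have hprod : β * (u * φ t) = -1 := by
      rw [hφt]
      field_simp
    have := congrArg (orbitProd φ) hprod
    rw [orbitProd_mul, orbitProd_mul, orbitProd_map (h5 t), orbitProd_of_map_eq_self hu,
      orbitProd_of_map_eq_self (x := -1) (by simp)] at this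
    have hz : orbitProd φ β * u ^ 4 ≠ 0 := mul_ne_zero (orbitProd_ne_zero hβ) (pow_ne_zero 4 hu0)
    refine mul_left_cancel₀ hz ?_
    linear_combination this - hun - orbitProd φ β * u ^ 3 * hul
  refine ⟨by simp [ht, hu0, hβ], ?_, ?_⟩
  · have hz : ∀ {x}, x ≠ 0 → φ x ≠ 0 := (map_ne_zero φ).2
    have hβ1 := hz hβ
    have hβ2 := hz hβ1
    have hβ3 := hz hβ2
    simp only [hα', hφt, map_div₀, map_neg, map_one, map_mul, hu]
    rw [orbitProd] at hun
    field_simp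
    linear_combination hun
  · refine mul_right_cancel₀ hu0 ?_
    rw [neg_mul, add_mul, hNt, hφt]
    field_simp
    ring

theorem exists_isSheekeyParam_iff {α β l : K} (h5 : ∀ x, φ (φ (φ (φ (φ x)))) = x)
    (hβ : β ≠ 0) (hα : φ α = l * (φ β * β)) (hl : φ l = l) (hl0 : l ≠ 0) (hl1 : l ≠ 1) :
    (∃ t, IsSheekeyParam φ α β t) ↔
      l ^ 5 * orbitProd φ β ^ 2 + l * (1 - 3 * l) * orbitProd φ β + 1 = 0 := by
  have hn := orbitProd_ne_zero (φ := φ) hβ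
  rw [← exists_mul_one_sub_iff hl0 hn hl1]
  refine ⟨fun ⟨t, h⟩ => h.exists_mul_one_sub h5 hβ hα, ?_⟩
  rintro ⟨u, hul, hun⟩
  have hu := map_eq_self_of_mul_one_sub hl (map_orbitProd (h5 β)) hl0 hn hl1 hul hun
  have hu0 : u ≠ 0 := by
    rintro rfl
    simp at hun
  exact ⟨_, isSheekeyParam_of_mul_one_sub h5 hβ hα hl hu hu0 hul hun⟩

end Equivalence

/-! ### The curve of points of weight at least two -/

/-- The five conjugates `lᵢ = λ ^ q ^ i` of `λ` together with `ν = N(β)`, as independent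
quantities. Identities are stated for arbitrary values; `OrbitData.IsOrbit` relates them. -/
structure OrbitData (R : Type*) where
  /-- `λ` -/
  l₀ : R
  /-- `λ ^ q` -/
  l₁ : R
  /-- `λ ^ q ^ 2` -/
  l₂ : R
  /-- `λ ^ q ^ 3` -/
  l₃ : R
  /-- `λ ^ q ^ 4` -/
  l₄ : R
  /-- `N(β)` -/
  ν : R

namespace OrbitData

variable {R R' : Type*} [CommRing R] [CommRing R']

/-- The cyclic shift of the conjugates, which is the effect of the Frobenius map. -/
@[simps]
def shift (c : OrbitData R) : OrbitData R := ⟨c.l₁, c.l₂, c.l₃, c.l₄, c.l₀, c.ν⟩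

/-- The image of the parameters under a ring homomorphism. -/
@[simps]
def map (φ : R →+* R') (c : OrbitData R) : OrbitData R' :=
  ⟨φ c.l₀, φ c.l₁, φ c.l₂, φ c.l₃, φ c.l₄, φ c.ν⟩

variable (c : OrbitData R)

/-- A solution of `x = s l₄ b₄ x ^ q - l₄ b₄ b₀ (s - 1) x ^ q ^ 2`, where `bᵢ = β ^ q ^ i`, is a
combination of any two of its consecutive conjugates. Up to a monomial in the `lᵢ` and `bᵢ`,
`coeff₂` is the coefficient of `x ^ q ^ 2` when `x` is expressed in `x ^ q ^ 2` and `x ^ q ^ 3`.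
Throughout, `t`, `T`, `S` stand for the successive conjugates of `s`. -/
def coeff₂ (s t : R) : R := s - 1 - c.l₀ * s * t

/-- The analogue of `coeff₂` for `x ^ q ^ 3` and `x ^ q ^ 4`. -/
def coeff₃ (s t T : R) : R := c.l₁ * c.coeff₂ s t * T + c.l₀ * s * (t - 1)

/-- The analogue of `coeff₂` for `x ^ q ^ 4` and `x ^ q ^ 5`. Its vanishing is half of the condition
`x ^ q ^ 5 = x`. -/
def coeff₄ (s t T S : R) : R := c.l₂ * S * c.coeff₃ s t T - c.l₁ * c.coeff₂ s t * (T - 1)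

/-- The constant term of `-closing₁` as a polynomial in `T`. -/
def closingConst₁ (s t : R) : R :=
  1 + c.ν * c.l₀ * c.l₂ * c.l₄ * s * (t - 1) + c.ν * c.l₁ * c.l₄ * c.coeff₂ s t

/-- The leading coefficient of `closing₂`, divided by `l₁`. -/
def closingLead₂ (s t : R) : R :=
  c.l₀ * t + c.ν * c.l₀ * c.l₃ * c.l₄ * (s - 1) * (t - 1) + c.l₄ * c.coeff₂ s t

/-- The constant term of `-closing₂`, divided by `l₀`. -/
def closingConst₂ (t s : R) : R :=
  (t - 1) * (1 - c.l₄ * s + c.ν * c.l₁ * c.l₃ * c.l₄ * (s - 1))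

/-- The first of two equations in `s` and its conjugates `t`, `T` which together express that all
solutions `x` of the equation in `coeff₂` satisfy `x ^ q ^ 5 = x`. -/
def closing₁ (s t T : R) : R :=
  (1 - c.l₂) * c.ν * c.l₁ * c.l₄ * c.coeff₂ s t * T - c.closingConst₁ s t

/-- The second of the two equations described at `closing₁`. -/
def closing₂ (s t T : R) : R := c.l₁ * c.closingLead₂ s t * T - c.l₀ * c.closingConst₂ t s

/-- The eliminant of `T` from `closing₁` and `closing₂`: a plane curve of bidegree `(2, 2)`. -/
def curve (s t : R) : R :=
  (1 - c.l₂) * c.ν * c.l₀ * c.l₄ * c.coeff₂ s t * c.closingConst₂ t s -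
    c.closingLead₂ s t * c.closingConst₁ s t

/-- The combination of `closing₁` and `closing₂` that is affine in each variable. -/
def pencil (s t T : R) : R :=
  (1 - c.l₄) * c.closing₁ s t T + c.ν * c.l₄ * (1 - c.l₂) * c.closing₂ s t T

/-- The slope of `pencil` in `s`. -/
def pencilSlope (t T : R) : R := c.pencil 1 t T - c.pencil 0 t T

/-- The linear factor `w` of the `s²`-coefficient of `curve`. -/
def w (t : R) : R := c.l₀ * (1 - c.l₁) * t - (c.l₀ - c.l₁)

/-- The linear factor `ρ` of the `s²`-coefficient of `curve`. -/
def rho (t : R) : R :=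
  c.l₀ * (1 - c.ν * c.l₂ * c.l₃) * t - (1 - c.ν * c.l₀ * c.l₂ * c.l₃)

/-- The linear form `σ` such that `shift.sigma t` is the denominator in solving for `closing₁` in
terms of `pencil` on the curve. -/
def sigma (s : R) : R :=
  c.l₄ * (1 - c.ν * c.l₂ * c.l₃) * s - (1 - c.ν * c.l₂ * c.l₃ * c.l₄)

/-- The linear form with `curve 1 t = -l₀ t τ(t)`. -/
def tau (t : R) : R :=
  (1 - c.l₄) * (c.ν * c.l₀ * c.l₄ * (1 - c.l₁) * t + 1 - c.ν * c.l₀ * c.l₄)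

/-- The `s²`-coefficient of `curve`. -/
def quadCoeff (t : R) : R := c.ν * c.l₄ ^ 2 * c.w t * c.rho t

/-- The `s`-coefficient of `curve`. -/
def linCoeff (t : R) : R := -(c.l₀ * t * c.tau t) - c.quadCoeff t - c.curve 0 t

/-- The complementary factor to `pencil`: their product vanishes at a point `(s, s ^ q)` of the
curve. -/
def conjFactor (s t T : R) : R := c.l₀ * t * c.pencilSlope t T + c.quadCoeff t * (s - 1)

/-- The polynomial that vanishes if `pencil` does at a point with `sigma s = shift.sigma t =
shift.shift.sigma T = 0`. -/
def resonance : R :=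
  c.ν ^ 2 * c.l₀ * c.l₁ * c.l₂ * c.l₃ * c.l₄ -
    c.ν * (c.l₀ * c.l₂ + c.l₁ * c.l₄ + c.l₂ * c.l₃) + c.ν * c.l₂ + 1

theorem curve_eq (s t : R) :
    c.curve s t = c.quadCoeff t * s ^ 2 + c.linCoeff t * s + c.curve 0 t := by
  simp only [curve, linCoeff, quadCoeff, w, rho, tau, coeff₂, closingConst₁, closingConst₂,
    closingLead₂]
  ring

theorem curve_zero_eq (t : R) :
    c.curve 0 t = (c.curve 0 1 - c.curve 0 0) * t + c.curve 0 0 := by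
  simp only [curve, coeff₂, closingConst₁, closingConst₂, closingLead₂]
  ring

theorem pencil_eq (s t T : R) : c.pencil s t T = s * c.pencilSlope t T + c.pencil 0 t T := by
  simp only [pencilSlope, pencil, closing₁, closing₂, coeff₂, closingConst₁, closingConst₂,
    closingLead₂]
  ring

theorem pencil_one (t T : R) : c.pencil 1 t T = -c.tau t := by
  simp only [tau, pencil, closing₁, closing₂, coeff₂, closingConst₁, closingConst₂, closingLead₂]
  ring

theorem pencil_mul_conjFactor (s t T : R) :
    c.pencil s t T * c.conjFactor s t T =
      c.pencilSlope t T * c.curve s t -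
        c.ν * c.l₄ ^ 2 * (1 - c.l₂) * (1 - s) * c.shift.sigma t * c.shift.curve t T := by
  simp only [conjFactor, pencilSlope, pencil, closing₁, closing₂, coeff₂, closingConst₁,
    closingConst₂, closingLead₂, sigma, curve, quadCoeff, w, rho, shift]
  ring

theorem sigma_mul_closing₁ (s t T : R) :
    (1 - s) * c.shift.sigma t * c.closing₁ s t T =
      c.coeff₂ s t * c.pencil s t T + c.curve s t := by
  simp only [pencil, closing₁, closing₂, coeff₂, closingConst₁, closingConst₂, closingLead₂, sigma,
    curve, shift]
  ring

theorem quadCoeff_mul_pencil_sub (s t T : R) :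
    (1 - s) * (c.quadCoeff t * c.pencil s t T -
      (2 * c.quadCoeff t * s + c.linCoeff t) * c.pencilSlope t T) =
      c.tau t * c.conjFactor s t T + c.pencilSlope t T * c.curve s t := by
  have h0 : c.pencil 0 t T = -c.tau t - c.pencilSlope t T := by
    rw [pencilSlope, pencil_one]
    ring
  rw [pencil_eq, curve_eq, conjFactor, h0, linCoeff]
  ring

theorem shift_closingLead₂_mul_coeff₄ (s t T S : R) :
    c.shift.closingLead₂ t T * c.coeff₄ s t T S =
      c.coeff₃ s t T * c.shift.closing₂ t T S -
        c.l₁ * c.l₀ * (1 - t) * (1 - T) * c.closing₁ s t T := by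
  simp only [coeff₄, coeff₃, closing₁, closing₂, coeff₂, closingConst₁, closingConst₂,
    closingLead₂, shift]
  ring

theorem shift_coeff₂_mul_coeff₄ (s t T S : R) :
    c.l₄ * (1 - c.l₃) * c.ν * c.l₀ * c.shift.coeff₂ t T * c.coeff₄ s t T S =
      c.l₄ * c.coeff₃ s t T * c.shift.closing₁ t T S -
        (c.l₀ * c.shift.coeff₂ t T * c.closing₁ s t T - c.closing₂ s t T) := by
  simp only [coeff₄, coeff₃, closing₁, closing₂, coeff₂, closingConst₁, closingConst₂,
    closingLead₂, shift]
  ring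

section Conjugation

variable (φ : R →+* R')

theorem map_closing₁ (s t T : R) :
    φ (c.closing₁ s t T) = (c.map φ).closing₁ (φ s) (φ t) (φ T) := by
  simp only [closing₁, closingConst₁, coeff₂, map_sub, map_add, map_mul, map_one, map_l₀, map_l₁,
    map_l₂, map_l₄, map_ν]

theorem map_closing₂ (s t T : R) :
    φ (c.closing₂ s t T) = (c.map φ).closing₂ (φ s) (φ t) (φ T) := by
  simp only [closing₂, closingConst₂, closingLead₂, coeff₂, map_sub, map_add, map_mul, map_one,
    map_l₀, map_l₁, map_l₃, map_l₄, map_ν]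

theorem map_curve (s t : R) : φ (c.curve s t) = (c.map φ).curve (φ s) (φ t) := by
  simp only [curve, closingConst₁, closingConst₂, closingLead₂, coeff₂, map_sub, map_add, map_mul,
    map_one, map_l₀, map_l₁, map_l₂, map_l₃, map_l₄, map_ν]

theorem map_sigma (s : R) : φ (c.sigma s) = (c.map φ).sigma (φ s) := by
  simp only [sigma, map_sub, map_mul, map_one, map_l₂, map_l₃, map_l₄, map_ν]

theorem map_resonance : φ c.resonance = (c.map φ).resonance := by
  simp only [resonance, map_sub, map_add, map_mul, map_pow, map_one, map_l₀, map_l₁, map_l₂,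
    map_l₃, map_l₄, map_ν]

end Conjugation

variable {k : Type*} [Field k]

/-- The parameters form an orbit of length greater than one of `φ`, with fixed nonzero `ν`. -/
structure IsOrbit (φ : k →+* k) (c : OrbitData k) : Prop where
  map_eq : c.map φ = c.shift
  ν_ne_zero : c.ν ≠ 0
  l₀_ne_l₁ : c.l₀ ≠ c.l₁

namespace IsOrbit

variable {φ : k →+* k} {c : OrbitData k} (h : c.IsOrbit φ)

include h

theorem map_l₀ : φ c.l₀ = c.l₁ := congrArg OrbitData.l₀ h.map_eq

theorem map_l₁ : φ c.l₁ = c.l₂ := congrArg OrbitData.l₁ h.map_eq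

theorem map_l₂ : φ c.l₂ = c.l₃ := congrArg OrbitData.l₂ h.map_eq

theorem map_l₃ : φ c.l₃ = c.l₄ := congrArg OrbitData.l₃ h.map_eq

theorem map_l₄ : φ c.l₄ = c.l₀ := congrArg OrbitData.l₄ h.map_eq

theorem map_ν : φ c.ν = c.ν := congrArg OrbitData.ν h.map_eq

theorem shift : c.shift.IsOrbit φ where
  map_eq := by
    simp only [OrbitData.map, OrbitData.shift, h.map_l₀, h.map_l₁, h.map_l₂, h.map_l₃, h.map_l₄,
      h.map_ν]
  ν_ne_zero := h.ν_ne_zero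
  l₀_ne_l₁ := by
    simpa only [shift_l₀, shift_l₁, h.map_l₀, h.map_l₁] using φ.injective.ne h.l₀_ne_l₁

theorem l₀_ne_zero : c.l₀ ≠ 0 := fun e => h.l₀_ne_l₁ <| by rw [← h.map_l₀, e, map_zero]

theorem one_sub_l₀_ne_zero : 1 - c.l₀ ≠ 0 :=
  sub_ne_zero.2 fun e => h.l₀_ne_l₁ <| by rw [← h.map_l₀, ← e, map_one]

theorem l₀_sub_l₁_ne_zero : c.l₀ - c.l₁ ≠ 0 := sub_ne_zero.2 h.l₀_ne_l₁

theorem l₀_sub_l₂_ne_zero : c.l₀ - c.l₂ ≠ 0 := sub_ne_zero.2 fun e₀ => h.l₀_ne_l₁ <| by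
  have e₁ : c.l₁ = c.l₃ := by rw [← h.map_l₀, e₀, h.map_l₂]
  have e₂ : c.l₂ = c.l₄ := by rw [← h.map_l₁, e₁, h.map_l₃]
  rw [e₁, ← h.map_l₂, e₂, h.map_l₄]

theorem one_sub_l₀_mul_l₁_ne_zero : 1 - c.ν * c.l₀ * c.l₁ ≠ 0 := fun e => by
  have e' := congrArg φ e
  simp only [map_sub, map_mul, map_one, map_zero, h.map_l₀, h.map_l₁, h.map_ν] at e'
  refine mul_ne_zero (mul_ne_zero h.ν_ne_zero h.shift.l₀_ne_zero) h.l₀_sub_l₂_ne_zero ?_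
  rw [shift_l₀]
  linear_combination e' - e

theorem one_sub_l₀_mul_l₁_mul_l₂_ne_zero : 1 - c.ν * c.l₀ * c.l₁ * c.l₂ ≠ 0 := fun e => by
  have e' := congrArg φ e
  simp only [map_sub, map_mul, map_one, map_zero, h.map_l₀, h.map_l₁, h.map_l₂, h.map_ν] at e'
  refine mul_ne_zero (mul_ne_zero (mul_ne_zero h.ν_ne_zero h.shift.l₀_ne_zero)
    h.shift.shift.l₀_ne_zero) h.shift.shift.shift.l₀_sub_l₂_ne_zero ?_
  simp only [OrbitData.shift]
  linear_combination e - e'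

theorem one_sub_l₀_mul_l₂_mul_l₃_ne_zero : 1 - c.ν * c.l₀ * c.l₂ * c.l₃ ≠ 0 := fun e => by
  have e' := congrArg φ (congrArg φ e)
  simp only [map_sub, map_mul, map_one, map_zero, h.map_l₀, h.map_l₁, h.map_l₂, h.map_l₃, h.map_l₄,
    h.map_ν] at e'
  refine mul_ne_zero (mul_ne_zero (mul_ne_zero h.ν_ne_zero h.l₀_ne_zero)
    h.shift.shift.l₀_ne_zero) h.shift.shift.shift.l₀_sub_l₁_ne_zero ?_
  simp only [OrbitData.shift]
  linear_combination e' - e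

theorem map_closing₁ (s t T : k) :
    φ (c.closing₁ s t T) = c.shift.closing₁ (φ s) (φ t) (φ T) := by
  rw [OrbitData.map_closing₁, h.map_eq]

theorem map_closing₂ (s t T : k) :
    φ (c.closing₂ s t T) = c.shift.closing₂ (φ s) (φ t) (φ T) := by
  rw [OrbitData.map_closing₂, h.map_eq]

theorem map_curve (s t : k) : φ (c.curve s t) = c.shift.curve (φ s) (φ t) := by
  rw [OrbitData.map_curve, h.map_eq]

theorem map_sigma (s : k) : φ (c.sigma s) = c.shift.sigma (φ s) := by
  rw [OrbitData.map_sigma, h.map_eq]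

theorem ne_one_of_curve_eq_zero {s : k} (hG : c.curve s (φ s) = 0) : s ≠ 1 := by
  rintro rfl
  have hval : c.curve 1 1 = -(c.l₀ * (1 - c.l₄) * (1 - c.ν * c.l₄ * c.l₀ * c.l₁)) := by
    simp only [curve, coeff₂, closingConst₁, closingConst₂, closingLead₂]
    ring
  rw [map_one, hval] at hG
  have h₄ := h.shift.shift.shift.shift
  exact neg_ne_zero.2 (mul_ne_zero (mul_ne_zero h.l₀_ne_zero h₄.one_sub_l₀_ne_zero)
    h₄.one_sub_l₀_mul_l₁_mul_l₂_ne_zero) hG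

theorem sigma_eq_zero_iff {s : k} :
    c.sigma s = 0 ↔
      s = (1 - c.ν * c.l₂ * c.l₃ * c.l₄) / (c.l₄ * (1 - c.ν * c.l₂ * c.l₃)) := by
  have hden : c.l₄ * (1 - c.ν * c.l₂ * c.l₃) ≠ 0 :=
    mul_ne_zero h.shift.shift.shift.shift.l₀_ne_zero h.shift.shift.one_sub_l₀_mul_l₁_ne_zero
  rw [eq_div_iff hden, sigma, sub_eq_zero, mul_comm s]

theorem pencil_and_closing₂_of_sigma_eq_zero {s t T : k} (hs : c.sigma s = 0)
    (ht : c.shift.sigma t = 0) (hT : c.shift.shift.sigma T = 0) :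
    c.pencil s t T = -((1 - c.l₄) / (1 - c.ν * c.l₂ * c.l₃)) * c.resonance ∧
      (1 - c.ν * c.l₂ * c.l₃) * (1 - c.ν * c.l₃ * c.l₄) * (1 - c.ν * c.l₄ * c.l₀) *
        c.closing₂ s t T =
      (1 - c.l₄) * ((1 - c.l₀) * c.shift.resonance +
        c.l₀ * (1 - c.ν * c.l₃ * c.l₄) * c.resonance) := by
  have h₂ : 1 - c.ν * c.l₂ * c.l₃ ≠ 0 := h.shift.shift.one_sub_l₀_mul_l₁_ne_zero
  have h₃ : 1 - c.ν * c.l₃ * c.l₄ ≠ 0 := h.shift.shift.shift.one_sub_l₀_mul_l₁_ne_zero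
  have h₄ : 1 - c.ν * c.l₄ * c.l₀ ≠ 0 := h.shift.shift.shift.shift.one_sub_l₀_mul_l₁_ne_zero
  have hl₀ : c.l₀ ≠ 0 := h.l₀_ne_zero
  have hl₁ : c.l₁ ≠ 0 := h.shift.l₀_ne_zero
  have hl₄ : c.l₄ ≠ 0 := h.shift.shift.shift.shift.l₀_ne_zero
  rw [h.sigma_eq_zero_iff] at hs
  rw [h.shift.sigma_eq_zero_iff] at ht
  rw [h.shift.shift.sigma_eq_zero_iff] at hT
  simp only [OrbitData.shift] at ht hT
  rw [hs, ht, hT]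
  simp only [pencil, closing₁, closing₂, coeff₂, closingConst₁, closingConst₂, closingLead₂,
    resonance, OrbitData.shift]
  generalize hp₂ : 1 - c.ν * c.l₂ * c.l₃ = p₂ at h₂ ⊢
  generalize hp₃ : 1 - c.ν * c.l₃ * c.l₄ = p₃ at h₃ ⊢
  generalize hp₄ : 1 - c.ν * c.l₄ * c.l₀ = p₄ at h₄ ⊢
  constructor <;> field_simp <;> rw [← hp₂, ← hp₃, ← hp₄] <;> ring

theorem closing₂_eq_zero_of_sigma_eq_zero {s : k} (hσ : c.sigma s = 0)
    (hP : c.pencil s (φ s) (φ (φ s)) = 0) : c.closing₂ s (φ s) (φ (φ s)) = 0 := by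
  have hσ₁ : c.shift.sigma (φ s) = 0 := by rw [← h.map_sigma, hσ, map_zero]
  have hσ₂ : c.shift.shift.sigma (φ (φ s)) = 0 := by rw [← h.shift.map_sigma, hσ₁, map_zero]
  have h₂ : 1 - c.ν * c.l₂ * c.l₃ ≠ 0 := h.shift.shift.one_sub_l₀_mul_l₁_ne_zero
  have h₃ : 1 - c.ν * c.l₃ * c.l₄ ≠ 0 := h.shift.shift.shift.one_sub_l₀_mul_l₁_ne_zero
  have h₄ : 1 - c.ν * c.l₄ * c.l₀ ≠ 0 := h.shift.shift.shift.shift.one_sub_l₀_mul_l₁_ne_zero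
  have hl₄ : 1 - c.l₄ ≠ 0 := h.shift.shift.shift.shift.one_sub_l₀_ne_zero
  obtain ⟨hpencil, hclosing⟩ := h.pencil_and_closing₂_of_sigma_eq_zero hσ hσ₁ hσ₂
  have hres : c.resonance = 0 :=
    (mul_eq_zero.1 (hpencil ▸ hP)).resolve_left (neg_ne_zero.2 (div_ne_zero hl₄ h₂))
  have hres' : c.shift.resonance = 0 := by rw [← h.map_eq, ← map_resonance, hres, map_zero]
  rw [hres, hres', mul_zero, mul_zero, add_zero, mul_zero] at hclosing
  exact (mul_eq_zero.1 hclosing).resolve_left (mul_ne_zero (mul_ne_zero h₂ h₃) h₄)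

theorem closing_eq_zero {s : k} (hG : c.curve s (φ s) = 0)
    (hP : c.pencil s (φ s) (φ (φ s)) = 0) :
    c.closing₁ s (φ s) (φ (φ s)) = 0 ∧ c.closing₂ s (φ s) (φ (φ s)) = 0 := by
  have hs : 1 - s ≠ 0 := sub_ne_zero.2 (h.ne_one_of_curve_eq_zero hG).symm
  have hl₂ : 1 - c.l₂ ≠ 0 := h.shift.shift.one_sub_l₀_ne_zero
  have hl₄ : c.l₄ ≠ 0 := h.shift.shift.shift.shift.l₀_ne_zero
  have hl₄' : 1 - c.l₄ ≠ 0 := h.shift.shift.shift.shift.one_sub_l₀_ne_zero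
  rw [pencil] at hP
  by_cases hσ : c.sigma s = 0
  · have hB := h.closing₂_eq_zero_of_sigma_eq_zero hσ hP
    rw [hB, mul_zero, add_zero] at hP
    exact ⟨(mul_eq_zero.1 hP).resolve_left hl₄', hB⟩
  · have hσ₁ : c.shift.sigma (φ s) ≠ 0 := by rwa [← h.map_sigma, _root_.map_ne_zero]
    have hA : c.closing₁ s (φ s) (φ (φ s)) = 0 := by
      have e := c.sigma_mul_closing₁ s (φ s) (φ (φ s))
      rw [pencil, hP, hG, mul_zero, add_zero] at e
      exact (mul_eq_zero.1 e).resolve_left (mul_ne_zero hs hσ₁)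
    rw [hA, mul_zero, zero_add] at hP
    exact ⟨hA, (mul_eq_zero.1 hP).resolve_left
      (mul_ne_zero (mul_ne_zero h.ν_ne_zero hl₄) hl₂)⟩

theorem closingLead₂_ne_zero {s t T : k} (hs : s ≠ 1) (hA : c.closing₁ s t T = 0)
    (hY : c.coeff₂ s t = 0) : c.closingLead₂ s t ≠ 0 := by
  intro hlead
  simp only [closing₁, closingConst₁, hY, mul_zero, zero_mul, add_zero, zero_sub,
    neg_eq_zero] at hA
  rw [coeff₂] at hY
  have ht : t ≠ 0 := by
    rintro rfl
    rw [mul_zero, sub_zero, sub_eq_zero] at hY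
    exact hs hY
  have hA' : 1 + c.ν * c.l₀ * c.l₃ * c.l₄ * s * (t - 1) = 0 := by
    refine (mul_eq_zero.1 ?_).resolve_left (mul_ne_zero h.l₀_ne_zero ht)
    rw [closingLead₂, coeff₂] at hlead
    linear_combination hlead - (c.l₄ + c.ν * c.l₀ * c.l₃ * c.l₄ * (t - 1)) * hY
  have hl : c.l₂ - c.l₃ ≠ 0 := h.shift.shift.l₀_sub_l₁_ne_zero
  exact hl (by linear_combination c.l₂ * hA' - c.l₃ * hA)

theorem coeff₄_eq_zero {s : k} (hs : s ≠ 1) (hA : c.closing₁ s (φ s) (φ (φ s)) = 0)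
    (hB : c.closing₂ s (φ s) (φ (φ s)) = 0) :
    c.coeff₄ s (φ s) (φ (φ s)) (φ (φ (φ s))) = 0 := by
  have hA₁ : c.shift.closing₁ (φ s) (φ (φ s)) (φ (φ (φ s))) = 0 := by
    rw [← h.map_closing₁, hA, map_zero]
  have hB₁ : c.shift.closing₂ (φ s) (φ (φ s)) (φ (φ (φ s))) = 0 := by
    rw [← h.map_closing₂, hB, map_zero]
  have hs₁ : φ s ≠ 1 := by rwa [Ne, map_eq_one_iff φ φ.injective]
  by_contra hD
  have hlead : c.shift.closingLead₂ (φ s) (φ (φ s)) = 0 := by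
    have e := c.shift_closingLead₂_mul_coeff₄ s (φ s) (φ (φ s)) (φ (φ (φ s)))
    rw [hA, hB₁, mul_zero, mul_zero, sub_zero] at e
    exact (mul_eq_zero.1 e).resolve_right hD
  have hY : c.shift.coeff₂ (φ s) (φ (φ s)) = 0 := by
    have hne : c.l₄ * (1 - c.l₃) * c.ν * c.l₀ ≠ 0 :=
      mul_ne_zero (mul_ne_zero (mul_ne_zero h.shift.shift.shift.shift.l₀_ne_zero
        h.shift.shift.shift.one_sub_l₀_ne_zero) h.ν_ne_zero) h.l₀_ne_zero
    have e := c.shift_coeff₂_mul_coeff₄ s (φ s) (φ (φ s)) (φ (φ (φ s)))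
    rw [hA, hB, hA₁, mul_zero, mul_zero, sub_zero, sub_zero] at e
    exact (mul_eq_zero.1 ((mul_eq_zero.1 e).resolve_right hD)).resolve_left hne
  exact h.shift.closingLead₂_ne_zero hs₁ hA₁ hY hlead

end IsOrbit

end OrbitData

/-! ### Counting points on the second branch -/

namespace OrbitData

variable {R : Type*} [CommRing R] (c : OrbitData R)

/-- A rescaled coordinate `V` on the curve. Where `conjFactor` vanishes, the conjugate of `V`
is an affine function of `V` with coefficients depending on `t` only. -/
def branchCoord (s t : R) : R := c.quadCoeff t * c.sigma s

/-- The trace of `branchCoord` over the two points of the curve with given `t`. -/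
def branchTrace (t : R) : R :=
  -(c.l₄ * (1 - c.ν * c.l₂ * c.l₃) * c.linCoeff t +
    2 * (1 - c.ν * c.l₂ * c.l₃ * c.l₄) * c.quadCoeff t)

/-- The product of `branchCoord` over the two points of the curve with given `t`, divided by
`quadCoeff t`. -/
def branchCofactor (t : R) : R :=
  (1 - c.ν * c.l₂ * c.l₃ * c.l₄) ^ 2 * c.quadCoeff t +
    (1 - c.ν * c.l₂ * c.l₃ * c.l₄) * (c.l₄ * (1 - c.ν * c.l₂ * c.l₃)) * c.linCoeff t +
    (c.l₄ * (1 - c.ν * c.l₂ * c.l₃)) ^ 2 * c.curve 0 t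

/-- The `t²`-coefficient of `quadCoeff`. -/
def quadCoeffLead : R := c.ν * c.l₀ ^ 2 * c.l₄ ^ 2 * (1 - c.l₁) * (1 - c.ν * c.l₂ * c.l₃)

/-- The `t²`-coefficient of `branchTrace`. -/
def branchTraceLead : R := -(c.quadCoeffLead * (1 - c.ν * c.l₂ * c.l₃ * c.l₄))

/-- The slope of the affine function `branchCofactor`. -/
def branchCofactorSlope : R :=
  c.ν * c.l₀ * c.l₄ ^ 2 * (1 - c.l₄) *
    ((1 - c.ν * c.l₂ * c.l₃) * (1 - c.l₂) * (1 - c.l₃) -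
      (1 - c.l₁) * (1 - c.ν * c.l₀ * c.l₂ * c.l₃) * (1 - c.ν * c.l₂ * c.l₃ * c.l₄))

/-- The coefficient of `t * V ^ q` in the relation between `V = branchCoord s t` and its conjugate
that holds where `conjFactor` vanishes. -/
def branchLead : R :=
  c.ν * c.l₀ * c.l₄ ^ 2 * (1 - c.l₂) * (1 - c.ν * c.l₂ * c.l₃)

/-- The slope of the constant term `branchConst` in the relation of `branchLead`. -/
def branchConstSlope : R :=
  -(c.ν * c.l₀ * c.l₄ ^ 2 * ((1 - c.ν * c.l₂ * c.l₃) *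
    (c.l₂ * (1 - c.l₀) - (1 - c.l₁) + c.l₄ * (c.l₀ - c.l₁) +
      c.ν * c.l₃ * c.l₄ * (c.l₀ * (1 - c.l₄) - c.l₁ * (c.l₀ - c.l₄) - (1 - c.l₀) * c.l₁ * c.l₂)) +
    (1 - c.l₄) * (1 - c.ν * c.l₃ * c.l₄) *
      ((1 - c.l₁) * (1 - c.ν * c.l₀ * c.l₂ * c.l₃) +
        (c.l₀ - c.l₁) * (1 - c.ν * c.l₂ * c.l₃))))

/-- The constant term in the relation of `branchLead`. -/
def branchConst (t : R) : R :=
  c.branchConstSlope * t + (1 - c.ν * c.l₃ * c.l₄) * (1 - c.l₄) * c.quadCoeff 0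

theorem quadCoeff_eq (t : R) : c.quadCoeff t =
    c.quadCoeffLead * t ^ 2 + (c.quadCoeff 1 - c.quadCoeffLead - c.quadCoeff 0) * t +
      c.quadCoeff 0 := by
  simp only [quadCoeff, quadCoeffLead, w, rho]
  ring

theorem branchTrace_eq (t : R) : c.branchTrace t =
    c.branchTraceLead * t ^ 2 + (c.branchTrace 1 - c.branchTraceLead - c.branchTrace 0) * t +
      c.branchTrace 0 := by
  simp only [branchTrace, branchTraceLead, quadCoeff, linCoeff, quadCoeffLead, w, rho, tau, curve,
    coeff₂, closingConst₁, closingConst₂, closingLead₂]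
  ring

theorem branchCofactor_eq (t : R) :
    c.branchCofactor t = c.branchCofactorSlope * t + c.branchCofactor 0 := by
  simp only [branchCofactor, branchCofactorSlope, quadCoeff, linCoeff, w, rho, tau, curve, coeff₂,
    closingConst₁, closingConst₂, closingLead₂]
  ring

theorem branchCoord_quadratic (s t : R) :
    c.branchCoord s t ^ 2 - c.branchTrace t * c.branchCoord s t +
      c.quadCoeff t * c.branchCofactor t =
      (c.l₄ * (1 - c.ν * c.l₂ * c.l₃)) ^ 2 * c.quadCoeff t * c.curve s t := by
  rw [curve_eq, branchCoord, branchTrace, branchCofactor, sigma]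
  ring

theorem branchLead_mul_eq (s t T : R) :
    c.branchLead * t * (c.shift.sigma t * c.shift.rho T) =
      c.branchConst t + (1 - c.ν * c.l₃ * c.l₄) * c.branchCoord s t -
        c.l₄ * (1 - c.ν * c.l₂ * c.l₃) * (1 - c.ν * c.l₃ * c.l₄) * c.conjFactor s t T := by
  simp only [branchLead, branchConst, branchConstSlope, branchCoord, conjFactor, pencilSlope,
    pencil, closing₁, closing₂, quadCoeff, w, rho, sigma, coeff₂, closingConst₁, closingConst₂,
    closingLead₂, OrbitData.shift]
  ring

theorem frobNorm_const_identity :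
    c.branchConst 0 ^ 2 + (1 - c.ν * c.l₃ * c.l₄) * (c.branchConst 0 * c.branchTrace 0) +
      (1 - c.ν * c.l₃ * c.l₄) ^ 2 * (c.quadCoeff 0 * c.branchCofactor 0) = 0 := by
  rw [branchConst, branchTrace, branchCofactor, linCoeff]
  ring

theorem frobNorm_lead_identity :
    c.branchLead * (c.l₁ * (1 - c.ν * c.l₃ * c.l₄) * c.shift.branchCofactorSlope) *
        c.branchTraceLead -
      c.shift.branchTraceLead * (c.branchConstSlope * c.branchTraceLead +
        (1 - c.ν * c.l₃ * c.l₄) * (c.ν * c.l₄ ^ 2 * (c.l₀ * (1 - c.l₁)) *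
          (c.l₀ * (1 - c.ν * c.l₂ * c.l₃) * c.branchCofactorSlope))) =
      c.l₀ ^ 5 * c.l₁ ^ 2 * c.l₄ ^ 4 * c.ν ^ 3 * (1 - c.l₁) * (1 - c.l₂) * (1 - c.l₃) *
        (1 - c.l₄) * (c.l₀ - c.l₂) * (1 - c.ν * c.l₂ * c.l₃) ^ 2 *
        (1 - c.ν * c.l₃ * c.l₄) ^ 3 := by
  simp only [branchLead, branchCofactorSlope, branchTraceLead, branchConstSlope, quadCoeffLead,
    OrbitData.shift]
  ring

end OrbitData

namespace OrbitData.IsOrbit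

variable {k : Type*} [Field k] {φ : k →+* k} {c : OrbitData k} (h : c.IsOrbit φ)

include h

theorem map_branchTraceLead : φ c.branchTraceLead = c.shift.branchTraceLead := by
  simp only [branchTraceLead, quadCoeffLead, OrbitData.shift, map_neg, map_mul, map_sub, map_pow,
    map_one, h.map_l₀, h.map_l₁, h.map_l₂, h.map_l₃, h.map_l₄, h.map_ν]

theorem map_branchCofactorSlope : φ c.branchCofactorSlope = c.shift.branchCofactorSlope := by
  simp only [branchCofactorSlope, OrbitData.shift, map_mul, map_sub, map_pow, map_one,
    h.map_l₀, h.map_l₁, h.map_l₂, h.map_l₃, h.map_l₄, h.map_ν]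

theorem map_branchCoord (s : k) : φ (c.branchCoord s (φ s)) =
    φ (c.ν * c.l₄ ^ 2 * c.w (φ s)) * (c.shift.sigma (φ s) * c.shift.rho (φ (φ s))) := by
  have hρ : φ (c.rho (φ s)) = c.shift.rho (φ (φ s)) := by
    simp only [rho, OrbitData.shift, map_mul, map_sub, map_one, h.map_l₀, h.map_l₂, h.map_l₃,
      h.map_ν]
  rw [branchCoord, quadCoeff, map_mul, map_mul, hρ, h.map_sigma]
  ring

theorem map_ne_zero_of_conjFactor_eq_zero {s : k} (hM : c.conjFactor s (φ s) (φ (φ s)) = 0) :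
    φ s ≠ 0 := by
  intro ht
  obtain rfl : s = 0 := (map_eq_zero φ).1 ht
  have hM' : c.ν * c.l₄ ^ 2 * ((c.l₀ - c.l₁) * (1 - c.ν * c.l₀ * c.l₂ * c.l₃)) = 0 := by
    rw [ht, conjFactor, quadCoeff, w, rho] at hM
    linear_combination -hM
  exact mul_ne_zero (mul_ne_zero h.ν_ne_zero (pow_ne_zero 2 h.shift.shift.shift.shift.l₀_ne_zero))
    (mul_ne_zero h.l₀_sub_l₁_ne_zero h.one_sub_l₀_mul_l₂_mul_l₃_ne_zero) hM'

theorem w_map_ne_zero_of_conjFactor_eq_zero {s : k} (hM : c.conjFactor s (φ s) (φ (φ s)) = 0) :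
    c.w (φ s) ≠ 0 := by
  intro hw
  have hP₁ : c.pencilSlope (φ s) (φ (φ s)) = 0 := by
    have hmul : c.l₀ * φ s * c.pencilSlope (φ s) (φ (φ s)) = 0 := by
      simpa only [conjFactor, quadCoeff, hw, mul_zero, zero_mul, add_zero] using hM
    exact (mul_eq_zero.1 hmul).resolve_left
      (mul_ne_zero h.l₀_ne_zero (h.map_ne_zero_of_conjFactor_eq_zero hM))
  have hT : c.l₀ * c.l₁ * c.l₄ * c.ν * (1 - c.l₀) * (1 - c.l₂) * (1 - c.ν * c.l₁ * c.l₃ * c.l₄) *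
      (φ (φ s) - 1) = 0 := by
    have hid (t T : k) : c.l₀ * (1 - c.l₁) * c.pencilSlope t T =
        c.l₀ * c.l₁ * c.l₄ * c.ν * (1 - c.l₀) * (1 - c.l₂) * (1 - c.ν * c.l₁ * c.l₃ * c.l₄) *
          (T - 1) + (c.pencilSlope 1 T - c.pencilSlope 0 T) * c.w t := by
      simp only [pencilSlope, pencil, closing₁, closing₂, coeff₂, closingConst₁, closingConst₂,
        closingLead₂, w]
      ring
    simpa only [hP₁, hw, mul_zero, add_zero, eq_comm] using hid (φ s) (φ (φ s))
  have ht : φ s = 1 := by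
    have h₁ := h.shift
    have h₂ := h₁.shift
    have h₄ := h₂.shift.shift
    refine φ.injective ((sub_eq_zero.1 ((mul_eq_zero.1 hT).resolve_left ?_)).trans φ.map_one.symm)
    refine mul_ne_zero (mul_ne_zero (mul_ne_zero (mul_ne_zero (mul_ne_zero (mul_ne_zero
      h.l₀_ne_zero h₁.l₀_ne_zero) h₄.l₀_ne_zero) h.ν_ne_zero) h.one_sub_l₀_ne_zero)
      h₂.one_sub_l₀_ne_zero) h₁.one_sub_l₀_mul_l₂_mul_l₃_ne_zero
  refine mul_ne_zero h.shift.l₀_ne_zero h.one_sub_l₀_ne_zero ?_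
  rw [ht, w] at hw
  simp only [shift_l₀]
  linear_combination hw

theorem branchLead_mul_pow_eq {q : ℕ} (hφ : ∀ x, φ x = x ^ q) {s : k}
    (hM : c.conjFactor s (φ s) (φ (φ s)) = 0) :
    c.branchLead * φ s * c.branchCoord s (φ s) ^ q = (c.ν * c.l₄ ^ 2 * c.w (φ s)) ^ q *
      (c.branchConst (φ s) + (1 - c.ν * c.l₃ * c.l₄) * c.branchCoord s (φ s)) := by
  have hV := c.branchLead_mul_eq s (φ s) (φ (φ s))
  rw [hM, mul_zero, sub_zero] at hV
  rw [← hφ (c.branchCoord s (φ s)), h.map_branchCoord, ← hφ, ← hV]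
  ring

theorem frobNorm_lead_ne_zero {q : ℕ} (hq : q ≠ 0) (hφ : ∀ x, φ x = x ^ q) :
    c.branchLead ^ 2 * (c.l₀ * (1 - c.ν * c.l₂ * c.l₃) * c.branchCofactorSlope) ^ q -
      c.branchLead * (c.branchConstSlope * c.branchTraceLead ^ q + (1 - c.ν * c.l₃ * c.l₄) *
        (c.ν * c.l₄ ^ 2 * (c.l₀ * (1 - c.l₁)) * (c.l₀ * (1 - c.ν * c.l₂ * c.l₃) *
          c.branchCofactorSlope) * c.branchTraceLead ^ (q - 1))) ≠ 0 := by
  have h₁ := h.shift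
  have h₂ := h₁.shift
  have h₃ := h₂.shift
  have h₄ := h₃.shift
  have hlead : c.branchLead ≠ 0 := mul_ne_zero (mul_ne_zero (mul_ne_zero (mul_ne_zero h.ν_ne_zero
    h.l₀_ne_zero) (pow_ne_zero 2 h₄.l₀_ne_zero)) h₂.one_sub_l₀_ne_zero)
    h₂.one_sub_l₀_mul_l₁_ne_zero
  have hslope : (c.l₀ * (1 - c.ν * c.l₂ * c.l₃) * c.branchCofactorSlope) ^ q =
      c.l₁ * (1 - c.ν * c.l₃ * c.l₄) * c.shift.branchCofactorSlope := by
    rw [← hφ, map_mul, h.map_branchCofactorSlope]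
    simp only [map_mul, map_sub, map_one, h.map_l₀, h.map_l₂, h.map_l₃, h.map_ν]
  have htrace : c.branchTraceLead ^ q = c.shift.branchTraceLead := by
    rw [← hφ, h.map_branchTraceLead]
  have htrace' : c.branchTraceLead ^ (q - 1) * c.branchTraceLead = c.shift.branchTraceLead := by
    rw [← pow_succ, Nat.sub_add_cancel (Nat.one_le_iff_ne_zero.2 hq), htrace]
  intro h0
  refine mul_ne_zero (mul_ne_zero (mul_ne_zero (mul_ne_zero (mul_ne_zero (mul_ne_zero (mul_ne_zero
    (mul_ne_zero (mul_ne_zero (mul_ne_zero (pow_ne_zero 5 h.l₀_ne_zero)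
    (pow_ne_zero 2 h₁.l₀_ne_zero)) (pow_ne_zero 4 h₄.l₀_ne_zero)) (pow_ne_zero 3 h.ν_ne_zero))
    h₁.one_sub_l₀_ne_zero) h₂.one_sub_l₀_ne_zero) h₃.one_sub_l₀_ne_zero) h₄.one_sub_l₀_ne_zero)
    h.l₀_sub_l₂_ne_zero) (pow_ne_zero 2 h₂.one_sub_l₀_mul_l₁_ne_zero))
    (pow_ne_zero 3 h₃.one_sub_l₀_mul_l₁_ne_zero) (c.frobNorm_lead_identity.symm.trans ?_)
  refine (mul_eq_zero.1 ?_).resolve_left hlead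
  rw [hslope, htrace] at h0
  linear_combination c.branchTraceLead * h0 + c.branchLead * ((1 - c.ν * c.l₃ * c.l₄) *
    (c.ν * c.l₄ ^ 2 * (c.l₀ * (1 - c.l₁)) *
      (c.l₀ * (1 - c.ν * c.l₂ * c.l₃) * c.branchCofactorSlope))) * htrace'

theorem card_le_of_forall_conjFactor_eq_zero {q : ℕ} (hq : 2 ≤ q) (hφ : ∀ x, φ x = x ^ q)
    {S : Finset k} (hS : ∀ s ∈ S, c.curve s (φ s) = 0 ∧ c.conjFactor s (φ s) (φ (φ s)) = 0) :
    S.card ≤ 2 * q + 1 := by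
  classical
  set b : k[X] := C c.branchConstSlope * X +
    C ((1 - c.ν * c.l₃ * c.l₄) * (1 - c.l₄) * c.quadCoeff 0)
  set w : k[X] := C (c.ν * c.l₄ ^ 2 * (c.l₀ * (1 - c.l₁))) * X +
    C (-(c.ν * c.l₄ ^ 2 * (c.l₀ - c.l₁)))
  set E : k[X] := C c.branchTraceLead * X ^ 2 +
    C (c.branchTrace 1 - c.branchTraceLead - c.branchTrace 0) * X + C (c.branchTrace 0)
  set r : k[X] := C (c.l₀ * (1 - c.ν * c.l₂ * c.l₃)) * X + C (-(1 - c.ν * c.l₀ * c.l₂ * c.l₃))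
  set g : k[X] := C c.branchCofactorSlope * X + C (c.branchCofactor 0)
  have hb (t : k) : b.eval t = c.branchConst t := by simp [b, branchConst]
  have hw (t : k) : w.eval t = c.ν * c.l₄ ^ 2 * c.w t := by
    simp only [w, OrbitData.w, eval_add, eval_mul, eval_C, eval_X]
    ring
  have hE (t : k) : E.eval t = c.branchTrace t := by simp [E, c.branchTrace_eq t]
  have hr (t : k) : r.eval t = c.rho t := by
    simp only [r, rho, eval_add, eval_mul, eval_C, eval_X]
    ring
  have hg (t : k) : g.eval t = c.branchCofactor t := by simp [g, c.branchCofactor_eq t]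
  rw [← Finset.card_image_of_injective S φ.injective]
  refine card_le_of_forall_exists_mul_pow_eq hq (b := b) (w := w) (E := E) (H := r * g)
    (c := c.branchLead) (e := 1 - c.ν * c.l₃ * c.l₄) natDegree_linear_le natDegree_linear_le
    natDegree_quadratic_le (natDegree_mul_le_of_le natDegree_linear_le natDegree_linear_le)
    ?_ ?_ (Finset.forall_mem_image.2 fun s hs => ?_)
  · simpa only [coeff_zero_eq_eval_zero, eval_add, eval_mul, eval_pow, eval_C, hb, hw, hE, hr, hg,
      quadCoeff, mul_assoc] using c.frobNorm_const_identity
  · rw [coeff_two_linear_mul_linear, coeff_one_linear, coeff_one_linear, coeff_two_quadratic]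
    exact h.frobNorm_lead_ne_zero (by omega) hφ
  · obtain ⟨hG, hM⟩ := hS s hs
    refine ⟨h.map_ne_zero_of_conjFactor_eq_zero hM, ?_, c.branchCoord s (φ s), ?_, ?_⟩
    · rw [hw]
      exact mul_ne_zero (mul_ne_zero h.ν_ne_zero
        (pow_ne_zero 2 h.shift.shift.shift.shift.l₀_ne_zero))
        (h.w_map_ne_zero_of_conjFactor_eq_zero hM)
    · have := c.branchCoord_quadratic s (φ s)
      rw [hG, mul_zero, quadCoeff] at this
      rw [hE, hw, eval_mul, hr, hg]
      linear_combination this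
    · rw [hw, hb, h.branchLead_mul_pow_eq hφ hM]

theorem two_mul_quadCoeff_mul_add_linCoeff_ne_zero {s : k} (hG : c.curve s (φ s) = 0)
    (hM : c.conjFactor s (φ s) (φ (φ s)) = 0) (hP : c.pencil s (φ s) (φ (φ s)) ≠ 0) :
    2 * c.quadCoeff (φ s) * s + c.linCoeff (φ s) ≠ 0 := by
  intro hderiv
  have ht : c.l₀ * φ s ≠ 0 := mul_ne_zero h.l₀_ne_zero (h.map_ne_zero_of_conjFactor_eq_zero hM)
  have hquad : c.quadCoeff (φ s) = 0 := by
    have := c.quadCoeff_mul_pencil_sub s (φ s) (φ (φ s))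
    rw [hderiv, hG, hM, zero_mul, mul_zero, mul_zero, sub_zero, add_zero] at this
    exact (mul_eq_zero.1 ((mul_eq_zero.1 this).resolve_left
      (sub_ne_zero.2 (h.ne_one_of_curve_eq_zero hG).symm))).resolve_right hP
  have hlin : c.linCoeff (φ s) = 0 := by
    simpa only [hquad, mul_zero, zero_mul, zero_add] using hderiv
  have hcurve : c.curve 0 (φ s) = 0 := by
    simpa only [curve_eq _ s, hquad, hlin, zero_mul, zero_add] using hG
  have htau : c.tau (φ s) = 0 := by
    refine (mul_eq_zero.1 ?_).resolve_left ht
    rw [linCoeff, hquad, hcurve] at hlin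
    linear_combination -hlin
  have hslope : c.pencilSlope (φ s) (φ (φ s)) = 0 := by
    refine (mul_eq_zero.1 ?_).resolve_left ht
    simpa only [conjFactor, hquad, zero_mul, add_zero] using hM
  apply hP
  have hone := c.pencil_one (φ s) (φ (φ s))
  rw [pencil_eq, hslope, htau] at hone
  rw [pencil_eq, hslope]
  linear_combination hone

theorem exists_finset_card_eq_of_curve [IsAlgClosed k] {q : ℕ} (hq : 0 < q) (hqk : (q : k) = 0)
    (hsimple : ∀ s, c.curve s (s ^ q) = 0 →
      2 * c.quadCoeff (s ^ q) * s + c.linCoeff (s ^ q) ≠ 0) :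
    ∃ S : Finset k, S.card = 2 * q + 2 ∧ ∀ s ∈ S, c.curve s (s ^ q) = 0 := by
  set A : k[X] := C c.quadCoeffLead * X ^ 2 +
    C (c.quadCoeff 1 - c.quadCoeffLead - c.quadCoeff 0) * X + C (c.quadCoeff 0)
  set D : k[X] := C (c.curve 0 1 - c.curve 0 0) * X + C (c.curve 0 0)
  set B : k[X] := -(C (c.l₀ * (c.tau 1 - c.tau 0)) * X ^ 2 + C (c.l₀ * c.tau 0) * X + C 0) - A - D
  have hA (t : k) : A.eval t = c.quadCoeff t := by simp [A, c.quadCoeff_eq t]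
  have hD (t : k) : D.eval t = c.curve 0 t := by simp [D, c.curve_zero_eq t]
  have hB (t : k) : B.eval t = c.linCoeff t := by
    simp only [B, eval_sub, eval_neg, eval_add, eval_mul, eval_pow, eval_C, eval_X, hA, hD,
      linCoeff, tau]
    ring
  have hlead : c.quadCoeffLead ≠ 0 := mul_ne_zero (mul_ne_zero (mul_ne_zero (mul_ne_zero
    h.ν_ne_zero (pow_ne_zero 2 h.l₀_ne_zero)) (pow_ne_zero 2
    h.shift.shift.shift.shift.l₀_ne_zero)) h.shift.one_sub_l₀_ne_zero)
    h.shift.shift.one_sub_l₀_mul_l₁_ne_zero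
  have hA2 : A.natDegree = 2 := natDegree_quadratic hlead
  have hA0 : A ≠ 0 := ne_zero_of_natDegree_gt (n := 1) (by omega)
  have hD2 : D.natDegree ≤ 2 := natDegree_linear_le.trans one_le_two
  have hB2 : B.natDegree ≤ 2 := by
    refine (natDegree_sub_le_of_le (natDegree_sub_le_of_le ((natDegree_neg _).trans_le
      natDegree_quadratic_le) hA2.le) hD2).trans_eq ?_
    rw [max_self, max_self]
  have := exists_finset_card_eq_of_expand hq hqk hA0 hA2 hB2 hD2
  simp only [hA, hB, hD, ← curve_eq] at this
  exact this hsimple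

theorem exists_closing₁_eq_zero_and_coeff₄_eq_zero [IsAlgClosed k] {q : ℕ} (hq : 2 ≤ q)
    (hqk : (q : k) = 0) (hφ : ∀ x, φ x = x ^ q) :
    ∃ s : k, s ≠ 1 ∧ c.closing₁ s (φ s) (φ (φ s)) = 0 ∧
      c.coeff₄ s (φ s) (φ (φ s)) (φ (φ (φ s))) = 0 := by
  by_contra! hne
  have hP {s : k} (hG : c.curve s (φ s) = 0) : c.pencil s (φ s) (φ (φ s)) ≠ 0 := fun hP =>
    have hs := h.ne_one_of_curve_eq_zero hG
    have ⟨hA, hB⟩ := h.closing_eq_zero hG hP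
    hne s hs hA (h.coeff₄_eq_zero hs hA hB)
  have hM {s : k} (hG : c.curve s (φ s) = 0) : c.conjFactor s (φ s) (φ (φ s)) = 0 := by
    have := c.pencil_mul_conjFactor s (φ s) (φ (φ s))
    rw [← h.map_curve, hG, map_zero, mul_zero, mul_zero, sub_zero] at this
    exact (mul_eq_zero.1 this).resolve_left (hP hG)
  obtain ⟨S, hcard, hS⟩ := h.exists_finset_card_eq_of_curve (by omega) hqk fun s hG => by
    rw [← hφ] at hG ⊢
    exact h.two_mul_quadCoeff_mul_add_linCoeff_ne_zero hG (hM hG) (hP hG)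
  have := h.card_le_of_forall_conjFactor_eq_zero hq hφ fun s hs => by
    have hG := hφ s ▸ hS s hs
    exact ⟨hG, hM hG⟩
  omega

end OrbitData.IsOrbit

/-! ### Maximum scattered implies `λ ∈ F` -/

theorem not_linearIndependent_pair_of_mul_eq_mul {K : Type*} [Field K] {u v : K × K}
    (h : u.1 * v.2 = u.2 * v.1) : ¬ LinearIndependent K ![u, v] := by
  intro hli
  rw [LinearIndependent.pair_iff] at hli
  have h₁ := (hli v.1 (-u.1) (Prod.ext (by simp [mul_comm]) (by simp [h, mul_comm]))).2
  have h₂ := (hli v.2 (-u.2) (Prod.ext (by simp [← h, mul_comm]) (by simp [mul_comm]))).2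
  have hu : u = 0 := Prod.ext (neg_eq_zero.1 h₁) (neg_eq_zero.1 h₂)
  exact one_ne_zero (hli 1 0 (by simp [hu])).1

theorem _root_.IsMaxScattered.card_le {q : ℕ} {K k : Type*} [Field K] [Field k] {F : Subfield K}
    [Finite F] {α β : K} (h : IsMaxScattered q F α β) (ι : K →+* k) (m : k) {S : Finset K}
    (hS : ∀ x ∈ S, ι (Tmap q α β x).1 = m * ι (Tmap q α β x).2) : S.card ≤ Nat.card F := by
  classical
  have := Fintype.ofFinite F
  rw [Nat.card_eq_fintype_card]
  by_cases hx : ∃ x ∈ S, x ≠ 0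
  · obtain ⟨x, hxS, hx0⟩ := hx
    suffices hSF : S ⊆ Finset.univ.image fun a : F => (a : K) * x from
      (Finset.card_le_card hSF).trans Finset.card_image_le
    intro y hyS
    have hmem : y / x ∈ F := by
      obtain rfl | hy0 := eq_or_ne y 0
      · simp
      · refine h.2 x y hx0 hy0 (not_linearIndependent_pair_of_mul_eq_mul (ι.injective ?_))
        rw [map_mul, map_mul, hS x hxS, hS y hyS]
        ring
    exact Finset.mem_image.2 ⟨⟨y / x, hmem⟩, Finset.mem_univ _, div_mul_cancel₀ y hx0⟩
  · have hS0 : S ⊆ {0} := fun x hxS => Finset.mem_singleton.2 (by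
      by_contra hx0
      exact hx ⟨x, hxS, hx0⟩)
    exact (Finset.card_le_card hS0).trans Fintype.card_pos

namespace OrbitData.IsOrbit

variable {k : Type*} [Field k] {φ : k →+* k} {c : OrbitData k} (h : c.IsOrbit φ)

include h

theorem map {k' : Type*} [Field k'] {φ' : k' →+* k'} {ι : k →+* k'}
    (hι : ∀ x, φ' (ι x) = ι (φ x)) : (c.map ι).IsOrbit φ' where
  map_eq := by
    simp only [OrbitData.map, OrbitData.shift, hι, h.map_l₀, h.map_l₁, h.map_l₂, h.map_l₃,
      h.map_l₄, h.map_ν]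
  ν_ne_zero := (map_ne_zero ι).2 h.ν_ne_zero
  l₀_ne_l₁ := ι.injective.ne h.l₀_ne_l₁

theorem iterate_five_eq_self {b s x : k} (hb : φ (φ (φ (φ (φ b)))) = b)
    (hν : c.ν = orbitProd φ b) (hA : c.closing₁ s (φ s) (φ (φ s)) = 0)
    (hD : c.coeff₄ s (φ s) (φ (φ s)) (φ (φ (φ s))) = 0)
    (hx : x - s * c.l₄ * φ (φ (φ (φ b))) * φ x +
      c.l₄ * φ (φ (φ (φ b))) * b * (s - 1) * φ (φ x) = 0) :
    φ (φ (φ (φ (φ x)))) = x := by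
  have hx₁ := congrArg φ hx
  have hx₂ := congrArg φ hx₁
  have hx₃ := congrArg φ hx₂
  simp only [map_sub, map_add, map_mul, map_one, map_zero, h.map_l₀, h.map_l₁, h.map_l₄, hb]
    at hx₁ hx₂ hx₃
  rw [closing₁, closingConst₁, coeff₂, hν, orbitProd] at hA
  rw [coeff₄, coeff₃, coeff₂] at hD
  set b₁ := φ b
  set b₂ := φ b₁
  set b₃ := φ b₂
  set b₄ := φ b₃
  set x₁ := φ x
  set x₂ := φ x₁
  set x₃ := φ x₂
  set x₄ := φ x₃
  set x₅ := φ x₄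
  linear_combination (-1) * hx - s * c.l₄ * b₄ * hx₁ +
    c.l₄ * b₄ * b * (s - 1 - c.l₀ * s * φ s) * hx₂ +
    c.l₄ * b₄ * b * b₁ *
      (c.l₁ * (s - 1 - c.l₀ * s * φ s) * φ (φ s) + c.l₀ * s * (φ s - 1)) * hx₃ +
    (c.l₄ * b₄ * b * b₁ * b₂ * x₄ - b * b₁ * b₂ * b₃ * b₄ * c.l₄ * x₅) * hD - x₅ * hA

theorem exists_finset_card_eq_sq [IsAlgClosed k] {q : ℕ} (hq : 2 ≤ q) (hqk : (q : k) = 0)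
    (hφ : ∀ x, φ x = x ^ q) {b : k} (hb : φ (φ (φ (φ (φ b)))) = b) (hν : c.ν = orbitProd φ b) :
    ∃ (s : k) (S : Finset k), S.card = q ^ 2 ∧ ∀ x ∈ S, φ (φ (φ (φ (φ x)))) = x ∧
      x - s * c.l₄ * φ (φ (φ (φ b))) * φ x +
        c.l₄ * φ (φ (φ (φ b))) * b * (s - 1) * φ (φ x) = 0 := by
  obtain ⟨s, hs, hA, hD⟩ := h.exists_closing₁_eq_zero_and_coeff₄_eq_zero hq hqk hφ
  have hb0 : b ≠ 0 := by
    rintro rfl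
    exact h.ν_ne_zero (hν.trans (by simp [orbitProd]))
  have hd : c.l₄ * φ (φ (φ (φ b))) * b * (s - 1) ≠ 0 := mul_ne_zero (mul_ne_zero
    (mul_ne_zero h.shift.shift.shift.shift.l₀_ne_zero (by simpa using hb0)) hb0)
    (sub_ne_zero.2 hs)
  obtain ⟨S, hcard, hS⟩ :=
    LinearSetFive.exists_finset_card_eq_sq hq hqk (-(s * c.l₄ * φ (φ (φ (φ b))))) hd
  refine ⟨s, S, hcard, fun x hxS => ?_⟩
  have hx : x - s * c.l₄ * φ (φ (φ (φ b))) * φ x +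
      c.l₄ * φ (φ (φ (φ b))) * b * (s - 1) * φ (φ x) = 0 := by
    rw [hφ (φ x), hφ x, ← pow_mul, ← pow_two]
    linear_combination hS x hxS
  exact ⟨h.iterate_five_eq_self hb hν hA hD hx, hx⟩

end OrbitData.IsOrbit

theorem isOrbit_conjugates {K : Type*} [Field K] {φ : K →+* K}
    (h5 : ∀ x, φ (φ (φ (φ (φ x)))) = x) {l β : K} (hβ : β ≠ 0) (hl : φ l ≠ l) :
    OrbitData.IsOrbit φ ⟨l, φ l, φ (φ l), φ (φ (φ l)), φ (φ (φ (φ l))), orbitProd φ β⟩ where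
  map_eq := by simp only [OrbitData.map, OrbitData.shift, h5, map_orbitProd (h5 β)]
  ν_ne_zero := orbitProd_ne_zero hβ
  l₀_ne_l₁ := hl.symm

theorem eq_mul_of_map_eq {K : Type*} [Field K] {φ : K →+* K}
    (h5 : ∀ x, φ (φ (φ (φ (φ x)))) = x) {α β l : K} (hα : φ α = l * (φ β * β)) :
    α = φ (φ (φ (φ l))) * φ (φ (φ (φ β))) * β := by
  have := congrArg (fun y => φ (φ (φ (φ y)))) hα
  simp only [map_mul, h5] at this
  rw [this]
  ring

section Scattered

variable {K : Type*} [Field K] [Finite K] {p n q : ℕ} [Fact p.Prime] [CharP K p] {α β l : K}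

theorem exists_finset_card_eq_sq_of_pow_ne_self (hn : n ≠ 0) (hq : q = p ^ n)
    (hK : Nat.card K = q ^ 5) (hβ : β ≠ 0) (hα : α ^ q = l * β ^ (q + 1)) (hl : l ^ q ≠ l) :
    ∃ (m : AlgebraicClosure K) (S : Finset K), S.card = q ^ 2 ∧ ∀ x ∈ S,
      algebraMap K (AlgebraicClosure K) (Tmap q α β x).1 = m * algebraMap _ _ (Tmap q α β x).2 := by
  classical
  let k := AlgebraicClosure K
  let ι : K →+* k := algebraMap K k
  have : CharP k p := charP_of_injective_algebraMap ι.injective p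
  let φ := iterateFrobenius K p n
  let φ' := iterateFrobenius k p n
  have hφ (x : K) : φ x = x ^ q := hq ▸ iterateFrobenius_def ..
  have hφ' (x : k) : φ' x = x ^ q := hq ▸ iterateFrobenius_def ..
  have hι (x : K) : φ' (ι x) = ι (φ x) := by rw [hφ, hφ', map_pow]
  have h5 := iterate_five_eq_self hφ hK
  have hq2 : 2 ≤ q := hq ▸ (Fact.out : p.Prime).two_le.trans (Nat.le_self_pow hn p)
  have hqk : (q : k) = 0 := by rw [hq, Nat.cast_pow, CharP.cast_eq_zero, zero_pow hn]
  have hφα : φ α = l * (φ β * β) := by rw [hφ, hφ, hα, pow_succ]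
  have hα' := congrArg ι (eq_mul_of_map_eq h5 hφα)
  have horbit := (isOrbit_conjugates h5 hβ (hφ l ▸ hl)).map hι
  obtain ⟨s, S, hcard, hS⟩ := horbit.exists_finset_card_eq_sq hq2 hqk hφ' (b := ι β)
    (by simp only [hι, h5]) (by simp only [OrbitData.map_ν, orbitProd, hι, map_mul])
  have hrange (y : k) (hy : y ∈ S) : y ∈ Set.range ι := by
    refine mem_range_algebraMap_of_pow_natCard_eq_self ?_
    calc y ^ Nat.card K = φ' (φ' (φ' (φ' (φ' y)))) := by
          simp only [hφ', hK]
          ring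
      _ = y := (hS y hy).1
  refine ⟨s * ι (φ (φ (φ (φ l))) * φ (φ (φ (φ β)))), S.preimage ι ι.injective.injOn, ?_,
    fun x hx => ?_⟩
  · rw [Finset.card_preimage, Finset.filter_true_of_mem hrange, hcard]
  · have hx' := (hS _ (Finset.mem_preimage.1 hx)).2
    simp only [OrbitData.map_l₄, hι] at hx'
    change ι _ = _ * ι _
    rw [Tmap, pow_two, pow_mul, ← hφ, ← hφ]
    simp only [map_sub, map_mul] at hα' ⊢
    rw [hα']
    linear_combination hx'

theorem _root_.IsMaxScattered.pow_eq_self {F : Subfield K} (h : IsMaxScattered q F α β)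
    (hn : n ≠ 0) (hq : q = p ^ n) (hF : Nat.card F = q) (hK : Nat.card K = q ^ 5) (hβ : β ≠ 0)
    (hα : α ^ q = l * β ^ (q + 1)) : l ^ q = l := by
  by_contra hl
  obtain ⟨m, S, hcard, hS⟩ := exists_finset_card_eq_sq_of_pow_ne_self hn hq hK hβ hα hl
  have hle := h.card_le (algebraMap K _) m hS
  have hq2 : 1 < q := hq ▸ Nat.one_lt_pow hn (Fact.out : p.Prime).one_lt
  rw [hcard, hF] at hle
  nlinarith

end Scattered

end LinearSetFive

open LinearSetFive

theorem stmt_17 (q : ℕ) (hq : ∃ p n : ℕ, Nat.Prime p ∧ 0 < n ∧ q = p ^ n)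
    (K : Type*) [Field K] (F : Subfield K)
    (hFcard : Nat.card F = q) (hKcard : Nat.card K = q ^ 5)
    (α β : K) (hαβ : α * β ≠ 0) (hne : α ^ q ≠ β ^ (q + 1))
    (hms : IsMaxScattered q F α β)
    (l : K) (hl : l = α ^ q / β ^ (q + 1)) :
    (∃ η : K, IsEquivToL q α β η 2) ↔
      l ^ 5 * (β ^ (1 + q + q ^ 2 + q ^ 3 + q ^ 4)) ^ 2 +
        l * (1 - 3 * l) * β ^ (1 + q + q ^ 2 + q ^ 3 + q ^ 4) + 1 = 0 := by
  obtain ⟨p, n, hp, hn, hqp⟩ := hq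
  have : Fact p.Prime := ⟨hp⟩
  have hq1 : 1 < q := hqp ▸ Nat.one_lt_pow hn.ne' hp.one_lt
  have : Finite K := Nat.finite_of_card_ne_zero (by rw [hKcard]; positivity)
  have := Fintype.ofFinite K
  have : CharP K p := charP_of_card_eq_prime_pow (f := n * 5) <| by
    rw [← Nat.card_eq_fintype_card, hKcard, hqp, pow_mul]
  have hφ (x : K) : iterateFrobenius K p n x = x ^ q := hqp ▸ iterateFrobenius_def ..
  have ⟨hα0, hβ0⟩ := mul_ne_zero_iff.1 hαβ
  have hβq : β ^ (q + 1) ≠ 0 := pow_ne_zero _ hβ0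
  have hα : α ^ q = l * β ^ (q + 1) := by rw [hl, div_mul_cancel₀ _ hβq]
  have hl0 : l ≠ 0 := hl ▸ div_ne_zero (pow_ne_zero q hα0) hβq
  have hl1 : l ≠ 1 := fun h => hne (by rw [hα, h, one_mul])
  have hlq : l ^ q = l := hms.pow_eq_self hn.ne' hqp hFcard hKcard hβ0 hα
  rw [exists_isEquivToL_iff hq1 hKcard hφ hms.1, exists_isSheekeyParam_iff
    (iterate_five_eq_self hφ hKcard) hβ0 (by rw [hφ, hφ, hα, pow_succ]) (by rw [hφ, hlq]) hl0 hl1,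
    orbitProd_eq_pow hφ]
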